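/- Let n ≥ 1, let χ be an irreducible complex character of the alternating group A_n, and let g ∈ A_n be an element with χ(g) ≠ 0. Then the order of g divides |A_n|/χ(1); equivalently, o(g)·χ(1) divides |A_n| = n!/2 (for n ≥ 2). -/

import Mathlib

section

open Finset MvPolynomial

namespace AltDiv

set_option linter.unusedSectionVars false

variable {N : ℕ}

noncomputable def fs (α : Fin N → ℕ) : Fin N →₀ ℕ := Finsupp.equivFunOnFinite.symm α

@[simp] theorem fs_apply (α : Fin N → ℕ) (i : Fin N) : fs α i = α i := rfl

theorem fs_inj {α β : Fin N → ℕ} : fs α = fs β ↔ α = β := Finsupp.equivFunOnFinite.symm.injective.eq_iff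

noncomputable def cf (α : Fin N → ℕ) : MvPolynomial (Fin N) ℤ →+ ℤ := coeffAddMonoidHom (fs α)

theorem cf_eq (α : Fin N → ℕ) (f) : cf α f = coeff (fs α) f := rfl

theorem cf_ext {f g : MvPolynomial (Fin N) ℤ} (h : ∀ α, cf α f = cf α g) : f = g := by
  apply MvPolynomial.ext
  intro m
  have := h (fun i => m i)
  rw [cf_eq, cf_eq] at this
  have e : fs (fun i => m i) = m := by ext i; rfl
  rwa [e] at this

theorem monomial_fs (α : Fin N → ℕ) : (monomial (fs α) (1:ℤ)) = ∏ i, X i ^ α i := by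
  rw [monomial_eq, Finsupp.prod_fintype]
  · simp
  · simp

theorem cf_monomial (α β : Fin N → ℕ) : cf α (∏ i, X i ^ β i) = if α = β then 1 else 0 := by
  rw [← monomial_fs, cf_eq, coeff_monomial]
  simp [fs_inj, eq_comm]

section words
variable {ι A : Type*} [Fintype ι] [DecidableEq ι] [DecidableEq A]

def cnt (v : ι → A) (a : A) : ℕ := #{i | v i = a}

theorem cnt_comp (v : ι → A) (g : Equiv.Perm ι) : cnt (v ∘ g) = cnt v := by
  funext a
  apply Finset.card_bij (fun i _ => g i)
  · simp
  · intro a _ b _ h; exact g.injective h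
  · intro b hb; exact ⟨g.symm b, by simpa using hb, by simp⟩

theorem exists_perm_of_cnt {v w : ι → A} (h : cnt v = cnt w) : ∃ g : Equiv.Perm ι, w ∘ g = v := by
  have e : ∀ a, Nonempty ({i // v i = a} ≃ {i // w i = a}) := by
    intro a
    rw [← Fintype.card_eq, Fintype.card_subtype, Fintype.card_subtype]
    exact congrFun h a
  refine ⟨(Equiv.sigmaFiberEquiv v).symm.trans
    ((Equiv.sigmaCongrRight (fun a => (e a).some)).trans (Equiv.sigmaFiberEquiv w)), ?_⟩
  funext i
  exact ((e (v i)).some ⟨i, rfl⟩).2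

theorem exists_word [Fintype A] (κ : A → ℕ) (h : ∑ a, κ a = Fintype.card ι) :
    ∃ w : ι → A, cnt w = κ := by
  have e : Nonempty (ι ≃ Σ a, Fin (κ a)) := by
    rw [← Fintype.card_eq]; simp [h]
  obtain ⟨e⟩ := e
  refine ⟨fun i => (e i).1, ?_⟩
  funext a
  have : cnt (fun i => (e i).1) a = Fintype.card {x : Σ a, Fin (κ a) // x.1 = a} := by
    rw [cnt, ← Fintype.card_subtype]
    exact Fintype.card_congr (e.subtypeEquiv (fun i => Iff.rfl))
  rw [this]
  have : Fintype.card {x : Σ a, Fin (κ a) // x.1 = a} = Fintype.card (Fin (κ a)) :=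
    Fintype.card_congr (Equiv.sigmaSubtype a)
  rw [this, Fintype.card_fin]

theorem burn [Fintype A] (κ : A → ℕ) (h : ∑ a, κ a = Fintype.card ι) :
    ∑ w : ι → A with cnt w = κ, #{g : Equiv.Perm ι | w ∘ g = w} = (Fintype.card ι).factorial := by
  obtain ⟨w0, h0⟩ := exists_word κ h
  rw [← Fintype.card_perm, ← Finset.card_univ]
  rw [Finset.card_eq_sum_card_fiberwise (f := fun g : Equiv.Perm ι => w0 ∘ g)
    (t := ({w | cnt w = κ} : Finset (ι → A)))]
  · apply Finset.sum_congr rfl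
    intro w hw
    rw [Finset.mem_filter] at hw
    obtain ⟨g0, hg0⟩ := exists_perm_of_cnt (hw.2.trans h0.symm)
    apply Finset.card_bij (fun g _ => g0 * g)
    · intro g hg
      simp only [mem_filter, mem_univ, true_and] at hg ⊢
      rw [Equiv.Perm.coe_mul, ← Function.comp_assoc, hg0, hg]
    · intro a _ b _ h; exact mul_left_cancel h
    · intro g hg
      simp only [mem_filter, mem_univ, true_and] at hg
      refine ⟨g0⁻¹ * g, ?_, by simp⟩
      simp only [mem_filter, mem_univ, true_and]
      rw [← hg0]
      rw [Equiv.Perm.coe_mul, Function.comp_assoc, ← Function.comp_assoc g0, ← Equiv.Perm.coe_mul]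
      simp [hg, hg0]
  · intro g _
    simp [cnt_comp, h0]

theorem prod_X_word (v : ι → Fin N) : ∏ i, (X (v i) : MvPolynomial (Fin N) ℤ) = ∏ a, X a ^ cnt v a := by
  rw [← Finset.prod_fiberwise' univ v]
  simp [cnt]

theorem cf_word (α : Fin N → ℕ) (v : ι → Fin N) :
    cf α (∏ i, (X (v i) : MvPolynomial (Fin N) ℤ)) = if cnt v = α then 1 else 0 := by
  rw [prod_X_word, cf_monomial]; simp [eq_comm]

variable (N) in
noncomputable def P (g : Equiv.Perm ι) : MvPolynomial (Fin N) ℤ :=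
  ∑ v : ι → Fin N with v ∘ g = v, ∏ i, X (v i)

theorem comp_inv_iff (g : Equiv.Perm ι) (v : ι → A) : v ∘ (g⁻¹ : Equiv.Perm ι) = v ↔ v ∘ g = v := by
  constructor
  · intro h
    conv_lhs => rw [← h]
    rw [Function.comp_assoc, ← Equiv.Perm.coe_mul]; simp
  · intro h
    conv_lhs => rw [← h]
    rw [Function.comp_assoc, ← Equiv.Perm.coe_mul]; simp

theorem P_inv (g : Equiv.Perm ι) : P N g⁻¹ = P N g := by
  unfold P
  simp only [comp_inv_iff]

theorem P_conj (s g : Equiv.Perm ι) : P N (s * g * s⁻¹) = P N g := by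
  unfold P
  apply Finset.sum_bij (fun v _ => v ∘ s)
  · intro v hv
    simp only [mem_filter, mem_univ, true_and] at hv ⊢
    conv_rhs => rw [← hv]
    simp only [Equiv.Perm.coe_mul, Function.comp_assoc]
    rw [← Equiv.Perm.coe_mul (s⁻¹)]; simp
  · intro v _ w _ h
    exact (s.surjective.injective_comp_right) h
  · intro v hv
    simp only [mem_filter, mem_univ, true_and] at hv
    refine ⟨v ∘ (s⁻¹ : Equiv.Perm ι), ?_, ?_⟩
    · simp only [mem_filter, mem_univ, true_and]
      simp only [Equiv.Perm.coe_mul, Function.comp_assoc]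
      rw [← Function.comp_assoc (s⁻¹ : Equiv.Perm ι) s, ← Equiv.Perm.coe_mul (s⁻¹) s]
      simp only [inv_mul_cancel, Equiv.Perm.coe_one, Function.id_comp]
      rw [← Function.comp_assoc, hv]
    · rw [Function.comp_assoc, ← Equiv.Perm.coe_mul (s⁻¹) s]; simp
  · intro v _
    exact (Equiv.prod_comp s (fun i => (X (v i) : MvPolynomial (Fin N) ℤ))).symm

theorem cf_P (μ : Fin N → ℕ) (g : Equiv.Perm ι) :
    cf μ (P N g) = #{v : ι → Fin N | v ∘ g = v ∧ cnt v = μ} := by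
  unfold P
  rw [map_sum]
  simp only [cf_word]
  rw [← Finset.sum_filter, Finset.filter_filter]
  simp

theorem rename_P (w : Equiv.Perm (Fin N)) (g : Equiv.Perm ι) : rename w (P N g) = P N g := by
  unfold P
  rw [map_sum]
  apply Finset.sum_bij (fun v _ => w ∘ v)
  · intro v hv
    simp only [mem_filter, mem_univ, true_and] at hv ⊢
    rw [Function.comp_assoc, hv]
  · intro v _ w' _ h
    exact (w.injective.comp_left) h
  · intro v hv
    simp only [mem_filter, mem_univ, true_and] at hv
    refine ⟨w.symm ∘ v, ?_, ?_⟩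
    · simp only [mem_filter, mem_univ, true_and]
      rw [Function.comp_assoc, hv]
    · funext i; simp
  · intro v _
    simp [map_prod]

/-- complete homogeneous polynomials as power series -/
noncomputable def Hs (N : ℕ) : PowerSeries (MvPolynomial (Fin N) ℤ) :=
  ∏ i : Fin N, PowerSeries.mk (fun b => X i ^ b)

noncomputable def hh (N m : ℕ) : MvPolynomial (Fin N) ℤ := PowerSeries.coeff m (Hs N)

theorem hh_eq (m : ℕ) : hh N m = ∑ κ ∈ piAntidiag univ m, ∏ i : Fin N, X i ^ κ i := by
  unfold hh Hs
  rw [PowerSeries.coeff_prod]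
  simp only [PowerSeries.coeff_mk]
  apply Finset.sum_bij (fun (l : Fin N →₀ ℕ) _ => (l : Fin N → ℕ))
  · intro l hl
    simp only [mem_finsuppAntidiag, mem_piAntidiag] at hl ⊢
    exact ⟨hl.1, by simp⟩
  · intro a _ b _ h; exact DFunLike.coe_injective h
  · intro κ hκ
    simp only [mem_piAntidiag] at hκ
    refine ⟨fs κ, ?_, rfl⟩
    rw [mem_finsuppAntidiag]
    exact ⟨hκ.1, by simp⟩
  · intros; rfl

theorem cauchy (μ : Fin N → ℕ) (hμ : ∑ a, μ a = Fintype.card ι) :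
    ∑ g : Equiv.Perm ι, (cf μ (P N g)) • P N g =
      ((Fintype.card ι).factorial : ℤ) • ∏ a, hh N (μ a) := by
  have L : ∀ g : Equiv.Perm ι, (cf μ (P N g)) • P N g =
      ∑ w : ι → Fin N × Fin N with cnt (Prod.fst ∘ w) = μ,
        if w ∘ g = w then ∏ i, (X (w i).2 : MvPolynomial (Fin N) ℤ) else 0 := by
    intro g
    rw [← Finset.sum_filter, Finset.filter_filter, cf_P]
    unfold P
    rw [natCast_zsmul, ← Finset.sum_const, ← Finset.sum_product']
    symm
    apply Finset.sum_bij (fun w _ => (Prod.fst ∘ w, Prod.snd ∘ w))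
    · intro w hw
      simp only [mem_filter, mem_univ, true_and, mem_product] at hw ⊢
      refine ⟨⟨?_, hw.1⟩, ?_⟩ <;> rw [Function.comp_assoc, hw.2]
    · intro w _ w' _ h
      simp only [Prod.mk.injEq] at h
      funext i
      exact Prod.ext (congrFun h.1 i) (congrFun h.2 i)
    · rintro ⟨v, u⟩ h
      simp only [mem_filter, mem_univ, true_and, mem_product] at h
      refine ⟨fun i => (v i, u i), ?_, rfl⟩
      simp only [mem_filter, mem_univ, true_and]
      refine ⟨h.1.2, ?_⟩
      funext i
      exact Prod.ext (congrFun h.1.1 i) (congrFun h.2 i)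
    · intros; rfl
  rw [Finset.sum_congr rfl (fun g _ => L g), Finset.sum_comm]
  simp only [← Finset.sum_filter, Finset.sum_const]
  simp only [hh_eq]
  rw [Finset.prod_univ_sum, Finset.smul_sum]
  rw [← Finset.sum_fiberwise_of_maps_to (g := fun w : ι → Fin N × Fin N => Function.curry (cnt w))
    (t := Fintype.piFinset fun i => piAntidiag univ (μ i))]
  · apply Finset.sum_congr rfl
    intro κ hκ
    simp only [Fintype.mem_piFinset, mem_piAntidiag] at hκ
    have hb := burn (ι := ι) (Function.uncurry κ) (by
      rw [← hμ, Fintype.sum_prod_type]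
      exact Finset.sum_congr rfl (fun a _ => (hκ a).1))
    rw [← hb]
    push_cast
    rw [Finset.sum_smul]
    rw [Finset.filter_filter]
    have hf : Finset.univ.filter (fun w : ι → Fin N × Fin N => cnt (Prod.fst ∘ w) = μ ∧ Function.curry (cnt w) = κ)
        = Finset.univ.filter (fun w => cnt w = Function.uncurry κ) := by
      ext w
      simp only [mem_filter, mem_univ, true_and]
      constructor
      · rintro ⟨_, h⟩
        rw [← h]; rfl
      · intro h
        refine ⟨?_, by rw [h]; rfl⟩
        funext a
        rw [← (hκ a).1]
        have : ∀ b, κ a b = cnt w (a, b) := fun b => by rw [h]; rfl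
        simp only [cnt]
        rw [Finset.card_eq_sum_card_fiberwise (f := fun i => (w i).2) (t := univ) (by simp)]
        apply Finset.sum_congr rfl
        intro b _
        rw [Finset.filter_filter, this]
        refine congrArg Finset.card ?_
        ext i
        simp [Prod.ext_iff]
    rw [hf]
    apply Finset.sum_congr rfl
    intro w hw
    simp only [mem_filter, mem_univ, true_and] at hw
    rw [natCast_zsmul]
    congr 1
    rw [← Finset.prod_fiberwise' univ w (fun x => (X x.2 : MvPolynomial (Fin N) ℤ)), Fintype.prod_prod_type]
    apply Finset.prod_congr rfl; intro a _
    apply Finset.prod_congr rfl; intro b _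
    rw [Finset.prod_const]
    congr 1
    exact congrFun hw (a, b)
  · intro w hw
    have hw : cnt (Prod.fst ∘ w) = μ := by simpa using hw
    rw [Fintype.mem_piFinset]
    intro a
    rw [mem_piAntidiag]
    refine ⟨?_, by simp⟩
    rw [← hw]
    simp only [cnt, Function.curry]
    rw [Finset.card_eq_sum_card_fiberwise (f := fun i => (w i).2) (t := univ) (by simp)]
    apply Finset.sum_congr rfl
    intro b _
    rw [Finset.filter_filter]
    refine congrArg Finset.card ?_
    ext i
    simp [Prod.ext_iff]

end words
end AltDiv
end
section

open Finset MvPolynomial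

namespace AltDiv

set_option linter.unusedSectionVars false

variable {N : ℕ}

noncomputable def alt (β : Fin N → ℕ) : MvPolynomial (Fin N) ℤ :=
  Matrix.det (Matrix.of fun i j => (X i : MvPolynomial (Fin N) ℤ) ^ β j)

noncomputable def Vd (N : ℕ) : MvPolynomial (Fin N) ℤ := alt (fun j : Fin N => (j : ℕ))

theorem Vd_ne_zero : Vd N ≠ 0 := by
  have : Vd N = (Matrix.vandermonde (fun i : Fin N => (X i : MvPolynomial (Fin N) ℤ))).det := rfl
  rw [this, Matrix.det_vandermonde_ne_zero_iff]
  exact X_injective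

theorem alt_eq (β : Fin N → ℕ) : alt β = ∑ w : Equiv.Perm (Fin N),
    (Equiv.Perm.sign w : ℤ) • ∏ i, X i ^ β (w i) := by
  unfold alt
  rw [Matrix.det_apply, ← Equiv.sum_comp (Equiv.inv _)]
  apply Finset.sum_congr rfl
  intro w _
  simp only [Equiv.inv_apply, Equiv.Perm.sign_inv, Matrix.of_apply]
  rw [← Equiv.prod_comp w]
  simp [Units.smul_def]

theorem rename_alt (w : Equiv.Perm (Fin N)) (β : Fin N → ℕ) :
    rename w (alt β) = (Equiv.Perm.sign w : ℤ) • alt β := by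
  unfold alt
  rw [AlgHom.map_det]
  have := Matrix.det_permute w (Matrix.of fun i j => (X i : MvPolynomial (Fin N) ℤ) ^ β j)
  rw [zsmul_eq_mul]
  rw [← this]
  congr 1
  ext i j : 2
  simp

/-- signed count -/
noncomputable def D (β γ : Fin N → ℕ) : ℤ := cf γ (alt β)

theorem D_eq (β γ : Fin N → ℕ) : D β γ = ∑ w : Equiv.Perm (Fin N),
    if γ = β ∘ w then (Equiv.Perm.sign w : ℤ) else 0 := by
  unfold D
  rw [alt_eq, map_sum]
  apply Finset.sum_congr rfl
  intro w _
  rw [map_zsmul, cf_monomial]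
  simp [Function.comp_def]

theorem cf_mul_monomial (α κ : Fin N → ℕ) (f : MvPolynomial (Fin N) ℤ) :
    cf α ((∏ i, X i ^ κ i) * f) = if ∀ i, κ i ≤ α i then cf (α - κ) f else 0 := by
  rw [← monomial_fs, cf_eq, coeff_monomial_mul', one_mul]
  have e : fs α - fs κ = fs (α - κ) := by ext i; rfl
  rw [cf_eq, e]
  refine if_congr Iff.rfl rfl rfl

noncomputable def Hm (β : Fin N → ℕ) : Matrix (Fin N) (Fin N) (MvPolynomial (Fin N) ℤ) :=
  Matrix.of fun l j => if (l : ℕ) ≤ β j then hh N (β j - l) else 0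

noncomputable def Es (i : Fin N) : PowerSeries (MvPolynomial (Fin N) ℤ) :=
  ∏ r ∈ univ.erase i, (1 - PowerSeries.C (X r) * PowerSeries.X)

theorem Es_mul (i : Fin N) : Es i * Hs N = PowerSeries.mk (fun b => X i ^ b) := by
  unfold Es Hs
  rw [← Finset.mul_prod_erase univ _ (mem_univ i), mul_left_comm, ← Finset.prod_mul_distrib]
  rw [Finset.prod_eq_one, mul_one]
  intro r _
  ext b : 1
  rw [sub_mul, one_mul, map_sub, mul_assoc, PowerSeries.coeff_C_mul, PowerSeries.coeff_mk]
  cases b with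
  | zero => simp
  | succ b =>
    rw [PowerSeries.coeff_succ_X_mul, PowerSeries.coeff_mk, PowerSeries.coeff_one]
    simp [pow_succ']

theorem Es_coeff (i : Fin N) (l : ℕ) (hl : N ≤ l) : PowerSeries.coeff l (Es i) = 0 := by
  have : Es i = ((∏ r ∈ univ.erase i, (1 - Polynomial.C (X r) * Polynomial.X) :
      Polynomial (MvPolynomial (Fin N) ℤ)) : PowerSeries _) := by
    unfold Es
    rw [← Polynomial.coeToPowerSeries.ringHom_apply, map_prod]
    simp
  rw [this, Polynomial.coeff_coe]
  apply Polynomial.coeff_eq_zero_of_natDegree_lt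
  refine lt_of_le_of_lt (Polynomial.natDegree_prod_le _ _) ?_
  refine lt_of_le_of_lt (Finset.sum_le_card_nsmul _ _ 1 ?_) ?_
  · intro r _
    compute_degree
  · rw [Finset.card_erase_of_mem (mem_univ i)]
    simp
    have := i.2
    omega

noncomputable def Em (N : ℕ) : Matrix (Fin N) (Fin N) (MvPolynomial (Fin N) ℤ) :=
  Matrix.of fun i l => PowerSeries.coeff (l : ℕ) (Es i)

theorem mat_eq (β : Fin N → ℕ) :
    (Matrix.of fun i j => (X i : MvPolynomial (Fin N) ℤ) ^ β j) = Em N * Hm β := by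
  refine Matrix.ext fun i j => ?_
  rw [Matrix.mul_apply]
  simp only [Matrix.of_apply, Em, Hm]
  have h := congrArg (PowerSeries.coeff (β j)) (Es_mul i)
  rw [PowerSeries.coeff_mk, PowerSeries.coeff_mul, Finset.Nat.sum_antidiagonal_eq_sum_range_succ_mk] at h
  rw [← h]
  simp only [mul_ite, mul_zero]
  rw [Fin.sum_univ_eq_sum_range (fun l => if l ≤ β j then PowerSeries.coeff l (Es i) * hh N (β j - l) else 0)]
  rw [← Finset.sum_filter]
  have : ((range N).filter (· ≤ β j)) ⊆ range (β j).succ := by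
    intro l; simp
  symm
  apply Finset.sum_subset this
  intro l hl hl'
  simp at hl hl'
  rw [Es_coeff i l (by omega), zero_mul]

theorem det_Hm_delta : (Hm (fun j : Fin N => (j : ℕ))).det = 1 := by
  rw [Matrix.det_of_isUpperTriangular]
  · apply Finset.prod_eq_one
    intro i _
    simp [Hm, hh, Hs, map_prod]
  · intro i j hij
    have : j < i := hij
    simp [Hm, this]

theorem jacobi_trudi (β : Fin N → ℕ) : Vd N * (Hm β).det = alt β := by
  have h1 : Vd N = (Em N).det := by
    unfold Vd alt
    rw [mat_eq, Matrix.det_mul, det_Hm_delta, mul_one]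
  rw [h1]
  unfold alt
  rw [mat_eq, Matrix.det_mul]

section psi
variable {ι : Type*} [Fintype ι] [DecidableEq ι]

noncomputable def psi (α : Fin N → ℕ) (g : Equiv.Perm ι) : ℤ := cf α (Vd N * P N g)

theorem psi_conj (α : Fin N → ℕ) (s g : Equiv.Perm ι) : psi α (s * g * s⁻¹) = psi α g := by
  unfold psi; rw [P_conj]

theorem psi_inv (α : Fin N → ℕ) (g : Equiv.Perm ι) : psi α g⁻¹ = psi α g := by
  unfold psi; rw [P_inv]

theorem psi_eq (α : Fin N → ℕ) (g : Equiv.Perm ι) : psi α g = ∑ w : Equiv.Perm (Fin N),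
    (Equiv.Perm.sign w : ℤ) * if ∀ i, (w i : ℕ) ≤ α i then cf (α - fun i => (w i : ℕ)) (P N g) else 0 := by
  unfold psi Vd
  rw [alt_eq, Finset.sum_mul, map_sum]
  apply Finset.sum_congr rfl
  intro w _
  rw [smul_mul_assoc, map_zsmul, cf_mul_monomial, smul_eq_mul]

theorem sum_perm (w : Equiv.Perm (Fin N)) : ∑ i, (w i : ℕ) = ∑ i : Fin N, (i : ℕ) :=
  Equiv.sum_comp w (fun i => (i : ℕ))

theorem sum_psi_P (β : Fin N → ℕ) (hβ : ∑ i, β i = Fintype.card ι + ∑ i : Fin N, (i : ℕ)) :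
    ∑ g : Equiv.Perm ι, (psi β g) • P N g = ((Fintype.card ι).factorial : ℤ) • (Hm β).det := by
  simp only [psi_eq, Finset.sum_smul]
  rw [Finset.sum_comm, Matrix.det_apply, Finset.smul_sum]
  apply Finset.sum_congr rfl
  intro w _
  by_cases h : ∀ i, (w i : ℕ) ≤ β i
  · simp only [if_pos h]
    simp only [mul_smul]
    rw [← Finset.smul_sum, cauchy]
    · rw [smul_comm, Units.smul_def]
      congr 2
      apply Finset.prod_congr rfl
      intro i _
      have := h i
      simp [Hm, this]
    · have h2 : ∑ i, (β - fun i => (w i : ℕ)) i + ∑ i, (w i : ℕ) = ∑ i, β i := by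
        rw [← Finset.sum_add_distrib]
        apply Finset.sum_congr rfl
        intro i _
        have := h i
        simp; omega
      rw [sum_perm, hβ] at h2
      omega
  · simp only [if_neg h, mul_zero, zero_smul, Finset.sum_const_zero]
    obtain ⟨i, hi⟩ := not_forall.mp h
    rw [Finset.prod_eq_zero (mem_univ i)]
    · simp
    · simp only [Hm, Matrix.of_apply, if_neg hi]

theorem orth (β γ : Fin N → ℕ) (hβ : ∑ i, β i = Fintype.card ι + ∑ i : Fin N, (i : ℕ)) :
    ∑ g : Equiv.Perm ι, psi β g * psi γ g = (Fintype.card ι).factorial * D β γ := by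
  have h := congrArg (fun f => cf γ (Vd N * f)) (sum_psi_P (ι := ι) β hβ)
  simp only [Finset.mul_sum, map_sum, mul_smul_comm, map_zsmul, smul_eq_mul, jacobi_trudi] at h
  exact h

end psi
end AltDiv
end
section

open Finset MvPolynomial

namespace AltDiv

set_option linter.unusedSectionVars false

variable {N : ℕ}

def IsAlt (f : MvPolynomial (Fin N) ℤ) : Prop :=
  ∀ w : Equiv.Perm (Fin N), rename w f = (Equiv.Perm.sign w : ℤ) • f

theorem isAlt_alt (β : Fin N → ℕ) : IsAlt (alt β) := fun w => rename_alt w β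

theorem isAlt_psi {ι : Type*} [Fintype ι] [DecidableEq ι] (g : Equiv.Perm ι) :
    IsAlt (Vd N * P N g) := by
  intro w
  rw [map_mul, rename_P, Vd, rename_alt, smul_mul_assoc]

theorem IsAlt.cf_comp {f : MvPolynomial (Fin N) ℤ} (hf : IsAlt f) (γ : Fin N → ℕ)
    (w : Equiv.Perm (Fin N)) : cf (γ ∘ w) f = Equiv.Perm.sign w * cf γ f := by
  have h := coeff_rename_mapDomain w w.injective f (fs (γ ∘ w))
  have e : Finsupp.mapDomain w (fs (γ ∘ w)) = fs γ := by
    ext i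
    obtain ⟨j, rfl⟩ := w.surjective i
    rw [Finsupp.mapDomain_apply w.injective]
    simp
  rw [e, hf w] at h
  rw [cf_eq, ← h, cf_eq, coeff_smul, smul_eq_mul]

theorem IsAlt.cf_not_inj {f : MvPolynomial (Fin N) ℤ} (hf : IsAlt f) (γ : Fin N → ℕ)
    (h : ¬ Function.Injective γ) : cf γ f = 0 := by
  obtain ⟨i, j, hij, hne⟩ : ∃ i j, γ i = γ j ∧ i ≠ j := by
    simpa [Function.Injective] using h
  have h1 := hf.cf_comp γ (Equiv.swap i j)
  have e : γ ∘ (Equiv.swap i j) = γ := by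
    funext x
    simp only [Function.comp]
    by_cases hx : x = i
    · subst hx; simp [hij]
    · by_cases hy : x = j
      · subst hy; simp [hij]
      · rw [Equiv.swap_apply_of_ne_of_ne hx hy]
  rw [e, Equiv.Perm.sign_swap hne] at h1
  simp at h1
  omega

theorem strict_unique {β γ : Fin N → ℕ} (hβ : StrictMono β) (hγ : StrictMono γ)
    (w : Equiv.Perm (Fin N)) (h : γ = β ∘ w) : β = γ ∧ w = 1 := by
  have hr : Set.range γ = Set.range β := by
    rw [h, Set.range_comp, w.range_eq_univ, Set.image_univ]
  have e : β = γ := ((StrictMono.range_inj hγ hβ).1 hr).symm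
  refine ⟨e, ?_⟩
  ext i
  rw [← e] at h
  have := hβ.injective (congrFun h i)
  simp [← this]

theorem D_strict {β γ : Fin N → ℕ} (hβ : StrictMono β) (hγ : StrictMono γ) :
    D β γ = if β = γ then 1 else 0 := by
  rw [D_eq]
  split_ifs with h
  · subst h
    rw [Finset.sum_eq_single 1]
    · simp
    · intro w _ hw
      rw [if_neg]
      intro h
      exact hw (strict_unique hβ hβ w h).2
    · simp
  · apply Finset.sum_eq_zero
    intro w _
    rw [if_neg]
    intro h'
    exact h (strict_unique hβ hγ w h').1

theorem D_ne_zero {β γ : Fin N → ℕ} (h : D β γ ≠ 0) : ∃ w : Equiv.Perm (Fin N), γ = β ∘ w := by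
  rw [D_eq] at h
  obtain ⟨w, _, hw⟩ := Finset.exists_ne_zero_of_sum_ne_zero h
  refine ⟨w, ?_⟩
  by_contra hc
  simp [hc] at hw

theorem D_cases {β : Fin N → ℕ} (hβ : StrictMono β) (γ : Fin N → ℕ) :
    D β γ = 0 ∨ D β γ = 1 ∨ D β γ = -1 := by
  by_cases h : D β γ = 0
  · exact Or.inl h
  · right
    obtain ⟨w, rfl⟩ := D_ne_zero h
    have : D β (β ∘ w) = Equiv.Perm.sign w * D β β := (isAlt_alt β).cf_comp β w
    rw [this, D_strict hβ hβ]
    rcases Int.units_eq_one_or (Equiv.Perm.sign w) with h | h <;> simp [h]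

noncomputable def BB (N m : ℕ) : Finset (Fin N → ℕ) := by
  classical
  exact (piAntidiag univ (m + ∑ i : Fin N, (i : ℕ))).filter StrictMono

theorem mem_BB {m : ℕ} {β : Fin N → ℕ} :
    β ∈ BB N m ↔ ∑ i, β i = m + ∑ i : Fin N, (i : ℕ) ∧ StrictMono β := by
  simp [BB]

theorem IsAlt.expand {f : MvPolynomial (Fin N) ℤ} (hf : IsAlt f) {m : ℕ} (γ : Fin N → ℕ)
    (hγ : ∑ i, γ i = m + ∑ i : Fin N, (i : ℕ)) :
    cf γ f = ∑ β ∈ BB N m, D β γ * cf β f := by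
  by_cases hi : Function.Injective γ
  · have hs : StrictMono (γ ∘ Tuple.sort γ) :=
      (Tuple.monotone_sort γ).strictMono_of_injective (hi.comp (Tuple.sort γ).injective)
    obtain ⟨w, hw⟩ : ∃ w, w = Tuple.sort γ := ⟨_, rfl⟩
    rw [← hw] at hs
    obtain ⟨δ, hδ⟩ : ∃ δ, δ = γ ∘ w := ⟨_, rfl⟩
    have e : γ = δ ∘ (w⁻¹ : Equiv.Perm (Fin N)) := by
      rw [hδ]; funext i; simp
    have hm : δ ∈ BB N m := by
      rw [mem_BB]
      refine ⟨?_, hδ ▸ hs⟩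
      rw [hδ, ← hγ]
      exact Equiv.sum_comp w γ
    rw [e, hf.cf_comp]
    rw [Finset.sum_eq_single δ]
    · have : D δ (δ ∘ (w⁻¹ : Equiv.Perm (Fin N))) = Equiv.Perm.sign w⁻¹ * D δ δ := (isAlt_alt δ).cf_comp δ w⁻¹
      rw [this, D_strict (hδ ▸ hs) (hδ ▸ hs)]
      simp
    · intro β hβ hne
      have : D β (δ ∘ (w⁻¹ : Equiv.Perm (Fin N))) = Equiv.Perm.sign w⁻¹ * D β δ := (isAlt_alt β).cf_comp δ w⁻¹
      rw [this, D_strict (mem_BB.1 hβ).2 (hδ ▸ hs), if_neg hne]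
      simp
    · intro h; exact absurd hm h
  · rw [hf.cf_not_inj γ hi, Finset.sum_eq_zero]
    intro β _
    rw [D, (isAlt_alt β).cf_not_inj γ hi, zero_mul]

section
variable {ι : Type*} [Fintype ι] [DecidableEq ι]

theorem psi_expand (γ : Fin N → ℕ) (hγ : ∑ i, γ i = Fintype.card ι + ∑ i : Fin N, (i : ℕ))
    (g : Equiv.Perm ι) : psi γ g = ∑ β ∈ BB N (Fintype.card ι), D β γ * psi β g :=
  (isAlt_psi g).expand γ hγ

theorem sum_cnt {A : Type*} [Fintype A] [DecidableEq A] (v : ι → A) : ∑ a, cnt v a = Fintype.card ι := by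
  unfold cnt
  rw [← Finset.card_eq_sum_card_fiberwise (by simp), Finset.card_univ]

theorem psi_eq_zero (γ : Fin N → ℕ) (hγ : ∑ i, γ i ≠ Fintype.card ι + ∑ i : Fin N, (i : ℕ))
    (g : Equiv.Perm ι) : psi γ g = 0 := by
  rw [psi_eq]
  apply Finset.sum_eq_zero
  intro w _
  split_ifs with h
  · rw [cf_P, Finset.filter_eq_empty_iff.2, Finset.card_empty]
    · simp
    · rintro v _ ⟨_, hv⟩
      apply hγ
      rw [← sum_cnt v, hv, ← sum_perm w, ← Finset.sum_add_distrib]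
      apply Finset.sum_congr rfl
      intro i _
      have := h i
      simp; omega
  · simp

theorem orth_BB {β γ : Fin N → ℕ} (hβ : β ∈ BB N (Fintype.card ι)) (hγ : γ ∈ BB N (Fintype.card ι)) :
    ∑ g : Equiv.Perm ι, psi β g * psi γ g = (Fintype.card ι).factorial * if β = γ then 1 else 0 := by
  rw [orth β γ (mem_BB.1 hβ).1, D_strict (mem_BB.1 hβ).2 (mem_BB.1 hγ).2]

theorem P_subtypeCongr (p : ι → Prop) [DecidablePred p] (c : Equiv.Perm {x // p x})
    (h : Equiv.Perm {x // ¬ p x}) : P N (Equiv.Perm.subtypeCongr c h) = P N c * P N h := by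
  unfold P
  rw [Finset.sum_mul_sum, ← Finset.sum_product']
  have key : ∀ v : ι → Fin N, v ∘ (Equiv.Perm.subtypeCongr c h) = v ↔
      ((fun x : {x // p x} => v x) ∘ c = (fun x : {x // p x} => v x) ∧
       (fun x : {x // ¬ p x} => v x) ∘ h = (fun x : {x // ¬ p x} => v x)) := by
    intro v
    constructor
    · intro hv
      constructor
      · funext x
        have := congrFun hv x
        simpa [Equiv.Perm.subtypeCongr.left_apply_subtype] using this
      · funext x
        have := congrFun hv x
        simpa [Equiv.Perm.subtypeCongr.right_apply_subtype] using this
    · rintro ⟨h1, h2⟩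
      funext x
      by_cases hx : p x
      · have := congrFun h1 ⟨x, hx⟩
        simpa [Equiv.Perm.subtypeCongr.left_apply _ _ hx] using this
      · have := congrFun h2 ⟨x, hx⟩
        simpa [Equiv.Perm.subtypeCongr.right_apply _ _ hx] using this
  apply Finset.sum_equiv (Equiv.piEquivPiSubtypeProd p (fun _ => Fin N))
  · intro v
    simp only [mem_filter, mem_univ, true_and, mem_product]
    exact key v
  · intro v _
    simp only [Equiv.piEquivPiSubtypeProd_apply]
    exact (Fintype.prod_subtype_mul_prod_subtype p (fun i => (X (v i) : MvPolynomial (Fin N) ℤ))).symm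

theorem P_transitive (c : Equiv.Perm ι) (hc : ∀ x y, c.SameCycle x y) [Nonempty ι] :
    P N c = ∑ i, X i ^ Fintype.card ι := by
  unfold P
  symm
  apply Finset.sum_bij (fun i _ => fun _ => i)
  · intro i _
    simp only [mem_filter, mem_univ, true_and]; rfl
  · intro i _ j _ h
    exact congrFun h (Classical.arbitrary ι)
  · intro v hv
    simp only [mem_filter, mem_univ, true_and] at hv
    refine ⟨v (Classical.arbitrary ι), mem_univ _, ?_⟩
    funext y
    obtain ⟨z, hz⟩ := hc (Classical.arbitrary ι) y
    have : ∀ z : ℤ, v ∘ (c ^ z : Equiv.Perm ι) = v := by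
      have hn : ∀ k : ℕ, v ∘ (c ^ k : Equiv.Perm ι) = v := by
        intro k
        induction k with
        | zero => rfl
        | succ k ih => rw [pow_succ, Equiv.Perm.coe_mul, ← Function.comp_assoc, ih, hv]
      intro z
      rcases z with k | k
      · simpa using hn k
      · rw [zpow_negSucc, comp_inv_iff]; exact hn _
    rw [← hz]
    exact (congrFun (this z) _).symm
  · intro i _
    simp

theorem psi_subtypeCongr (α : Fin N → ℕ) (p : ι → Prop) [DecidablePred p] [Nonempty {x // p x}]
    (c : Equiv.Perm {x // p x}) (hc : ∀ x y, c.SameCycle x y)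
    (h : Equiv.Perm {x // ¬ p x}) : psi α (Equiv.Perm.subtypeCongr c h) =
      ∑ i, if Fintype.card {x // p x} ≤ α i then psi (α - Pi.single i (Fintype.card {x // p x})) h else 0 := by
  unfold psi
  rw [P_subtypeCongr, P_transitive c hc, mul_left_comm, Finset.sum_mul, map_sum]
  apply Finset.sum_congr rfl
  intro i _
  have e : (X i : MvPolynomial (Fin N) ℤ) ^ Fintype.card {x // p x} =
      ∏ j, X j ^ (Pi.single i (Fintype.card {x // p x}) : Fin N → ℕ) j := by
    rw [Finset.prod_eq_single i]
    · simp
    · intro j _ hj; simp [hj]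
    · simp
  rw [e, cf_mul_monomial]
  refine if_congr ?_ rfl rfl
  constructor
  · intro h; simpa using h i
  · intro h j
    by_cases hj : j = i
    · subst hj; simpa using h
    · simp [hj]

end
end AltDiv
end
section

open Finset MvPolynomial

namespace AltDiv

set_option linter.unusedSectionVars false

variable {N : ℕ}
section
variable {ι : Type*} [Fintype ι] [DecidableEq ι]

theorem compl_aux1 (Θ : Equiv.Perm ι → ℂ)
    (h : ∀ α : Fin N → ℕ, ∑ g, Θ g * (psi α g : ℂ) = 0) (μ : Fin N → ℕ) :
    ∑ g, Θ g * (cf μ (P N g) : ℂ) = 0 := by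
  set φ : MvPolynomial (Fin N) ℤ →+* MvPolynomial (Fin N) ℂ := map (Int.castRingHom ℂ) with hφ
  have hinj : Function.Injective φ := map_injective _ (RingHom.injective_int _)
  set W : MvPolynomial (Fin N) ℂ := ∑ g, Θ g • φ (P N g) with hW
  have h0 : φ (Vd N) * W = 0 := by
    apply MvPolynomial.ext
    intro m
    rw [hW, Finset.mul_sum, coeff_sum, coeff_zero, ← h m]
    apply Finset.sum_congr rfl
    intro g _
    rw [mul_smul_comm, coeff_smul, ← map_mul, hφ, coeff_map, smul_eq_mul]
    congr 1
    rw [psi, cf_eq]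
    have : fs (m : Fin N → ℕ) = m := by ext; rfl
    rw [this]; rfl
  have hV : φ (Vd N) ≠ 0 := by
    rw [Ne, map_eq_zero_iff φ hinj]; exact Vd_ne_zero
  have hW0 : W = 0 := (mul_eq_zero.1 h0).resolve_left hV
  have := congrArg (coeff (fs μ)) hW0
  rw [hW, coeff_sum, coeff_zero] at this
  rw [← this]
  apply Finset.sum_congr rfl
  intro g _
  rw [coeff_smul, hφ, coeff_map, smul_eq_mul]
  rfl

theorem compl_aux2 (Θ : Equiv.Perm ι → ℂ) (hcl : ∀ s g, Θ (s * g * s⁻¹) = Θ g)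
    (h : ∀ α : Fin N → ℕ, ∑ g, Θ g * (psi α g : ℂ) = 0) (v : ι → Fin N) :
    ∑ g ∈ univ.filter (fun g : Equiv.Perm ι => v ∘ g = v), Θ g = 0 := by
  have h1 := compl_aux1 Θ h (cnt v)
  have h2 : ∑ u : ι → Fin N with cnt u = cnt v, ∑ g ∈ univ.filter (fun g : Equiv.Perm ι => u ∘ g = u), Θ g = 0 := by
    rw [← h1]
    simp only [Finset.sum_filter]
    simp only [← Finset.sum_filter (p := fun u : ι → Fin N => cnt u = cnt v)]
    rw [Finset.sum_comm]
    apply Finset.sum_congr rfl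
    intro g _
    rw [cf_P, ← Finset.sum_filter, Finset.filter_filter, Finset.sum_const, nsmul_eq_mul, mul_comm]
    simp [and_comm]
  have h3 : ∀ u : ι → Fin N, cnt u = cnt v →
      ∑ g ∈ univ.filter (fun g : Equiv.Perm ι => u ∘ g = u), Θ g = ∑ g ∈ univ.filter (fun g : Equiv.Perm ι => v ∘ g = v), Θ g := by
    intro u hu
    obtain ⟨s, rfl⟩ := exists_perm_of_cnt hu
    apply Finset.sum_equiv (MulAut.conj s).toEquiv
    · intro g
      simp only [mem_filter, mem_univ, true_and]
      show _ ↔ v ∘ (s * g * s⁻¹ : Equiv.Perm ι) = v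
      simp only [funext_iff, Function.comp, Equiv.Perm.coe_mul]
      constructor
      · intro h x
        have := h (s⁻¹ x)
        simpa using this
      · intro h x
        have := h (s x)
        simpa using this
    · intro g _
      exact (hcl s g).symm
  rw [Finset.sum_congr rfl (fun u hu => h3 u (by simpa using hu)), Finset.sum_const, nsmul_eq_mul] at h2
  refine (mul_eq_zero.1 h2).resolve_left ?_
  refine Nat.cast_ne_zero.2 (Finset.card_ne_zero.2 ?_)
  exact ⟨v, by simp⟩

theorem cycleType_eq_of_sameCycle {g h : Equiv.Perm ι}
    (H : ∀ x y, g.SameCycle x y ↔ h.SameCycle x y) : g.cycleType = h.cycleType := by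
  classical
  have key : ∀ g : Equiv.Perm ι, g.cycleType =
      (((univ.image (fun x => univ.filter (fun y => g.SameCycle x y))).filter
        (fun s => 2 ≤ #s)).val.map Finset.card) := by
    intro g
    rw [Equiv.Perm.cycleType_def]
    have inj : Set.InjOn Equiv.Perm.support (g.cycleFactorsFinset : Set (Equiv.Perm ι)) := by
      intro a ha b hb hab
      by_contra hne
      have := g.cycleFactorsFinset_pairwise_disjoint ha hb hne
      rw [Equiv.Perm.disjoint_iff_disjoint_support] at this
      rw [hab, disjoint_self] at this
      have hb' := (Equiv.Perm.mem_cycleFactorsFinset_iff.1 hb).1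
      exact hb'.ne_one (Equiv.Perm.support_eq_empty_iff.1 this)
    have e : g.cycleFactorsFinset.image Equiv.Perm.support =
        (univ.image (fun x => univ.filter (fun y => g.SameCycle x y))).filter (fun s => 2 ≤ #s) := by
      ext s
      simp only [mem_image, mem_filter, mem_univ, true_and]
      constructor
      · rintro ⟨c, hc, rfl⟩
        have hcc := (Equiv.Perm.mem_cycleFactorsFinset_iff.1 hc).1
        refine ⟨?_, hcc.two_le_card_support⟩
        obtain ⟨x, hx⟩ := hcc.nonempty_support
        refine ⟨x, ?_⟩
        have := Equiv.Perm.cycle_is_cycleOf hx hc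
        have hxs := Equiv.Perm.mem_cycleFactorsFinset_support_le hc hx
        ext y
        rw [this, Equiv.Perm.mem_support_cycleOf_iff' (Equiv.Perm.mem_support.1 hxs)]
        simp
      · rintro ⟨⟨x, rfl⟩, h2⟩
        have hx : x ∈ g.support := by
          rw [Equiv.Perm.mem_support]
          intro hx
          have : univ.filter (fun y => g.SameCycle x y) ⊆ {x} := by
            intro y hy
            simp only [mem_filter, mem_univ, true_and] at hy
            rw [mem_singleton]
            exact (hy.eq_of_left hx).symm
          have := Finset.card_le_card this
          simp at this
          omega
        refine ⟨g.cycleOf x, Equiv.Perm.cycleOf_mem_cycleFactorsFinset_iff.2 hx, ?_⟩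
        ext y
        rw [Equiv.Perm.mem_support_cycleOf_iff' (Equiv.Perm.mem_support.1 hx)]
        simp
    rw [← e, Finset.image_val_of_injOn inj, Multiset.map_map]
  rw [key g, key h]
  simp only [H]

theorem completeness (hN : Fintype.card ι ≤ N) (Θ : Equiv.Perm ι → ℂ)
    (hcl : ∀ s g, Θ (s * g * s⁻¹) = Θ g)
    (h : ∀ α : Fin N → ℕ, ∑ g, Θ g * (psi α g : ℂ) = 0) (g : Equiv.Perm ι) : Θ g = 0 := by
  classical
  obtain ⟨m, hm⟩ : ∃ m, m = #{x : ι × ι | g.SameCycle x.1 x.2} := ⟨_, rfl⟩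
  induction m using Nat.strong_induction_on generalizing g with
  | _ m ih =>
  obtain ⟨v, hv⟩ : ∃ v : ι → Fin N, ∀ x y, v x = v y ↔ g.SameCycle x y := by
    let S := Equiv.Perm.SameCycle.setoid g
    have hcard : Fintype.card (Quotient S) ≤ Fintype.card (Fin N) := by
      rw [Fintype.card_fin]
      exact (Fintype.card_quotient_le S).trans hN
    obtain ⟨e⟩ := Function.Embedding.nonempty_of_card_le hcard
    refine ⟨fun x => e (Quotient.mk S x), fun x y => ?_⟩
    rw [e.injective.eq_iff, Quotient.eq]
    rfl
  have h1 := compl_aux2 Θ hcl h v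
  have h2 : ∀ k : Equiv.Perm ι, v ∘ k = v →
      Θ k = if (∀ x y, k.SameCycle x y ↔ g.SameCycle x y) then Θ g else 0 := by
    intro k hk
    split_ifs with hc
    · have := Equiv.Perm.isConj_iff_cycleType_eq.2 (cycleType_eq_of_sameCycle hc)
      obtain ⟨s, hs⟩ := isConj_iff.1 this
      rw [← hs, hcl]
    · have hsub : ∀ x y, k.SameCycle x y → g.SameCycle x y := by
        rintro x y ⟨z, rfl⟩
        rw [← hv]
        have hall : ∀ z : ℤ, v ∘ (k ^ z : Equiv.Perm ι) = v := by
          have hn : ∀ j : ℕ, v ∘ (k ^ j : Equiv.Perm ι) = v := by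
            intro j
            induction j with
            | zero => rfl
            | succ j ih => rw [pow_succ, Equiv.Perm.coe_mul, ← Function.comp_assoc, ih, hk]
          intro z
          rcases z with j | j
          · simpa using hn j
          · rw [zpow_negSucc, comp_inv_iff]; exact hn _
        exact (congrFun (hall z) x).symm
      apply ih _ _ k rfl
      rw [hm]
      apply Finset.card_lt_card
      rw [Finset.ssubset_iff_subset_ne]
      refine ⟨?_, ?_⟩
      · intro x hx
        simp only [mem_filter, mem_univ, true_and] at hx ⊢
        exact hsub _ _ hx
      · intro he
        apply hc
        intro x y
        have := Finset.ext_iff.1 he (x, y)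
        simpa using this
  rw [Finset.sum_congr rfl (fun k hk => h2 k (by simpa using hk)), ← Finset.sum_filter,
    Finset.sum_const, nsmul_eq_mul] at h1
  refine (mul_eq_zero.1 h1).resolve_left ?_
  refine Nat.cast_ne_zero.2 (Finset.card_ne_zero.2 ?_)
  refine ⟨g, ?_⟩
  simp only [mem_filter, mem_univ, true_and]
  refine ⟨?_, by simp⟩
  funext x
  simp only [Function.comp]
  rw [hv]
  simp [Equiv.Perm.sameCycle_apply_left, Equiv.Perm.SameCycle.refl]

end
end AltDiv
end
section

open Finset MvPolynomial

namespace AltDiv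

set_option linter.unusedSectionVars false

variable {N : ℕ}

noncomputable def qq (n : ℕ) (α : Fin N → ℕ) : ℤ := cf α (Vd N * (∑ i, X i) ^ n)

theorem psi_one {ι : Type*} [Fintype ι] [DecidableEq ι] (α : Fin N → ℕ) :
    psi α (1 : Equiv.Perm ι) = qq (Fintype.card ι) α := by
  unfold psi qq
  congr 2
  unfold P
  have := Finset.prod_univ_sum (ι := ι) (fun _ => (univ : Finset (Fin N))) (fun _ j => (X j : MvPolynomial (Fin N) ℤ))
  simp only [Finset.prod_const, Finset.card_univ, Fintype.piFinset_univ] at this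
  rw [this]
  simp

theorem isAlt_qq (n : ℕ) : IsAlt (Vd N * (∑ i, X i) ^ n) := by
  intro w
  rw [map_mul, Vd, rename_alt, smul_mul_assoc, map_pow, map_sum]
  simp only [rename_X]
  rw [Equiv.sum_comp w (fun i => (X i : MvPolynomial (Fin N) ℤ))]

theorem qq_succ (n : ℕ) (α : Fin N → ℕ) :
    qq (n + 1) α = ∑ i, if 1 ≤ α i then qq n (α - Pi.single i 1) else 0 := by
  unfold qq
  rw [pow_succ', mul_left_comm, Finset.sum_mul, map_sum]
  apply Finset.sum_congr rfl
  intro i _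
  have e : (X i : MvPolynomial (Fin N) ℤ) =
      ∏ j, X j ^ (Pi.single i 1 : Fin N → ℕ) j := by
    rw [Finset.prod_eq_single i]
    · simp
    · intro j _ hj; simp [hj]
    · simp
  conv_lhs => rw [e]
  rw [cf_mul_monomial]
  refine if_congr ?_ rfl rfl
  constructor
  · intro h; simpa using h i
  · intro h j
    by_cases hj : j = i
    · subst hj; simpa using h
    · simp [hj]

theorem sub_single_apply (α : Fin N → ℕ) (i : Fin N) (k : ℕ) (j : Fin N) :
    (α - Pi.single i k : Fin N → ℕ) j = if j = i then α i - k else α j := by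
  by_cases h : j = i
  · subst h; simp
  · simp [h]

theorem qq_nonneg (n : ℕ) (α : Fin N → ℕ) (hα : StrictMono α) : 0 ≤ qq n α := by
  induction n generalizing α with
  | zero =>
    have : qq 0 α = D (fun j : Fin N => (j : ℕ)) α := by simp [qq, D, Vd]
    rw [this, D_strict (fun a b h => h) hα]
    split_ifs <;> simp
  | succ n ih =>
    rw [qq_succ]
    apply Finset.sum_nonneg
    intro i _
    split_ifs with h
    · by_cases hi : Function.Injective (α - Pi.single i 1)
      · apply ih
        apply Monotone.strictMono_of_injective _ hi
        intro a b hab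
        rcases hab.eq_or_lt with rfl | hab
        · exact le_rfl
        · have := hα hab
          rw [sub_single_apply, sub_single_apply]
          split_ifs with h1 h2 h2
          · exact le_rfl
          · subst h1; omega
          · subst h2; omega
          · omega
      · exact ((isAlt_qq n).cf_not_inj _ hi).ge
    · exact le_rfl

theorem strict_ge {α : Fin N → ℕ} (hα : StrictMono α) (i : Fin N) : (i : ℕ) ≤ α i := by
  obtain ⟨i, hi⟩ := i
  induction i with
  | zero => simp
  | succ k ih =>
    have h1 := ih (by omega)
    have h2 : α ⟨k, by omega⟩ < α ⟨k + 1, hi⟩ := hα (by simp [Fin.lt_def])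
    simp only at h1 ⊢
    omega

theorem qq_pos (n : ℕ) (α : Fin N → ℕ) (hα : StrictMono α)
    (hs : ∑ i, α i = n + ∑ i : Fin N, (i : ℕ)) : 0 < qq n α := by
  induction n generalizing α with
  | zero =>
    have : qq 0 α = D (fun j : Fin N => (j : ℕ)) α := by simp [qq, D, Vd]
    rw [this, D_strict (fun a b h => h) hα, if_pos]
    · exact one_pos
    · rw [zero_add] at hs
      have := (Finset.sum_eq_sum_iff_of_le (fun i (_ : i ∈ univ) => strict_ge hα i)).1 hs.symm
      funext i
      exact this i (mem_univ i)
  | succ n ih =>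
    have hex : ∃ i : Fin N, (i : ℕ) < α i := by
      by_contra hc
      push Not at hc
      have := Finset.sum_le_sum (fun i (_ : i ∈ univ) => hc i)
      omega
    obtain ⟨i, hi, hmin⟩ : ∃ i : Fin N, (i : ℕ) < α i ∧ ∀ j < i, α j ≤ j := by
      classical
      have := Finset.exists_minimal (s := univ.filter (fun i : Fin N => (i : ℕ) < α i)) (by
        obtain ⟨i, hi⟩ := hex; exact ⟨i, by simpa using hi⟩)
      obtain ⟨i, hi⟩ := this
      refine ⟨i, by simpa using hi.1, ?_⟩
      intro j hj
      by_contra hc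
      have := hi.2 (y := j) (by simpa using hc) hj.le
      exact absurd hj (not_lt.2 this)
    have hst : StrictMono (α - Pi.single i 1) := by
      intro a b hab
      have := hα hab
      rw [sub_single_apply, sub_single_apply]
      split_ifs with h1 h2 h2
      · omega
      · subst h1; omega
      · subst h2
        have := hmin a hab
        have h3 : (a : ℕ) < b := hab
        omega
      · omega
    rw [qq_succ]
    apply Finset.sum_pos'
    · intro j _
      split_ifs with h
      · by_cases hi : Function.Injective (α - Pi.single j 1)
        · apply qq_nonneg
          apply Monotone.strictMono_of_injective _ hi
          intro a b hab
          rcases hab.eq_or_lt with rfl | hab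
          · exact le_rfl
          · have := hα hab
            rw [sub_single_apply, sub_single_apply]
            split_ifs with h1 h2 h2
            · exact le_rfl
            · subst h1; omega
            · subst h2; omega
            · omega
        · exact ((isAlt_qq n).cf_not_inj _ hi).ge
      · exact le_rfl
    · refine ⟨i, mem_univ i, ?_⟩
      rw [if_pos (by omega)]
      apply ih _ hst
      have h2 : ∑ j, (α - Pi.single i 1 : Fin N → ℕ) j + ∑ j, (Pi.single i 1 : Fin N → ℕ) j = ∑ j, α j := by
        rw [← Finset.sum_add_distrib]
        apply Finset.sum_congr rfl
        intro j _
        rw [sub_single_apply]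
        split_ifs with h
        · subst h; simp; omega
        · simp [h]
      have h3 : ∑ j, (Pi.single i 1 : Fin N → ℕ) j = 1 := by simp
      rw [hs, h3] at h2
      omega

theorem psi_one_ne_zero {ι : Type*} [Fintype ι] [DecidableEq ι] {β : Fin N → ℕ}
    (h : β ∈ BB N (Fintype.card ι)) : psi β (1 : Equiv.Perm ι) ≠ 0 := by
  rw [psi_one]
  exact (qq_pos _ _ (mem_BB.1 h).2 (mem_BB.1 h).1).ne'

/-- coefficients -/
noncomputable def dd (k : ℕ) (α β : Fin N → ℕ) : ℤ :=
  ∑ i, if k ≤ α i then D β (α - Pi.single i k) else 0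

theorem dd_unique {k : ℕ} (hk : 0 < k) {α β : Fin N → ℕ} (hα : StrictMono α) {i j : Fin N}
    (hi : k ≤ α i) (hj : k ≤ α j) (h1 : D β (α - Pi.single i k) ≠ 0)
    (h2 : D β (α - Pi.single j k) ≠ 0) : i = j := by
  obtain ⟨w1, h1⟩ := D_ne_zero h1
  obtain ⟨w2, h2⟩ := D_ne_zero h2
  have e : ∀ (i : Fin N), k ≤ α i → ∀ w : Equiv.Perm (Fin N), α - Pi.single i k = β ∘ w →
      ((∑ x, (β x : ℤ) ^ 2) = ∑ x, (α x : ℤ) ^ 2 - 2 * k * α i + k ^ 2) := by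
    intro i hi w hw
    rw [← Equiv.sum_comp w (fun x => (β x : ℤ) ^ 2)]
    have : ∀ x, (β (w x) : ℤ) = α x - if x = i then (k : ℤ) else 0 := by
      intro x
      have := congrFun hw x
      simp only [Function.comp] at this
      rw [← this, sub_single_apply]
      split_ifs with h
      · subst h; push_cast [Nat.cast_sub hi]; ring
      · simp
    simp only [this]
    have : ∀ x, ((α x : ℤ) - if x = i then (k : ℤ) else 0) ^ 2 =
        (α x : ℤ) ^ 2 + if x = i then - 2 * k * (α i : ℤ) + k ^ 2 else 0 := by
      intro x
      split_ifs with h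
      · subst h; ring
      · ring
    simp only [this, Finset.sum_add_distrib]
    simp
    ring
  have h3 := (e i hi w1 h1).symm.trans (e j hj w2 h2)
  have h4 : (k : ℤ) * (α i) = k * α j := by linarith
  have h5 := mul_left_cancel₀ (by exact_mod_cast hk.ne') h4
  exact hα.injective (by exact_mod_cast h5)

theorem dd_cases {k : ℕ} (hk : 0 < k) {α β : Fin N → ℕ} (hα : StrictMono α) (hβ : StrictMono β) :
    dd k α β = 0 ∨ dd k α β = 1 ∨ dd k α β = -1 := by
  by_cases h : dd k α β = 0
  · exact Or.inl h
  · unfold dd at h ⊢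
    obtain ⟨i, _, hi⟩ := Finset.exists_ne_zero_of_sum_ne_zero h
    have hi1 : k ≤ α i := by
      by_contra hc; simp [hc] at hi
    rw [if_pos hi1] at hi
    rw [Finset.sum_eq_single i]
    · rw [if_pos hi1]; exact D_cases hβ _
    · intro j _ hj
      by_contra hc
      have hj1 : k ≤ α j := by
        by_contra hc'; simp [hc'] at hc
      rw [if_pos hj1] at hc
      exact hj (dd_unique hk hα hj1 hi1 hc hi)
    · simp

theorem cnt_sub_single {k : ℕ} (α : Fin N → ℕ) (i : Fin N) (hi : k ≤ α i) (x : ℕ) :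
    cnt (α - Pi.single i k) x + (if α i = x then 1 else 0) =
      cnt α x + (if α i = x + k then 1 else 0) := by
  unfold cnt
  rw [Finset.card_filter, Finset.card_filter]
  rw [← Finset.add_sum_erase univ _ (mem_univ i), ← Finset.add_sum_erase univ (fun j => if α j = x then 1 else 0) (mem_univ i)]
  have : ∑ j ∈ univ.erase i, (if (α - Pi.single i k : Fin N → ℕ) j = x then 1 else 0) =
      ∑ j ∈ univ.erase i, (if α j = x then 1 else 0) := by
    apply Finset.sum_congr rfl
    intro j hj
    rw [sub_single_apply, if_neg (Finset.ne_of_mem_erase hj)]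
  rw [this, sub_single_apply, if_pos rfl]
  have h2 : (if α i - k = x then 1 else 0) = (if α i = x + k then 1 else 0) :=
    if_congr (by omega) rfl rfl
  rw [h2]
  ring

theorem dd_ne_zero {k : ℕ} {α β : Fin N → ℕ} (h : dd k α β ≠ 0) :
    ∃ a : ℕ, ∀ x : ℕ, cnt β x + (if a = x then 1 else 0) =
      cnt α x + (if a = x + k then 1 else 0) := by
  unfold dd at h
  obtain ⟨i, _, hi⟩ := Finset.exists_ne_zero_of_sum_ne_zero h
  have hi1 : k ≤ α i := by
    by_contra hc; simp [hc] at hi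
  rw [if_pos hi1] at hi
  obtain ⟨w, hw⟩ := D_ne_zero hi
  refine ⟨α i, fun x => ?_⟩
  rw [← cnt_sub_single α i hi1, hw, cnt_comp]

theorem strict_cnt {α β : Fin N → ℕ} (hα : StrictMono α) (hβ : StrictMono β)
    (h : ∀ x, cnt α x = cnt β x) : α = β := by
  obtain ⟨w, hw⟩ := exists_perm_of_cnt (funext h)
  exact (strict_unique hβ hα w hw.symm).1.symm

theorem dd_share_aux {k : ℕ} (hk : 0 < k) {a a' b b' : ℕ} (n1 : a ≠ a') (n2 : b ≠ b')
    (key : ∀ x, (if a = x then 1 else 0) + (if a' = x + k then 1 else 0) +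
      (if b' = x then 1 else 0) + (if b = x + k then 1 else 0) =
      (if a' = x then 1 else 0) + (if a = x + k then 1 else 0) +
      (if b = x then 1 else 0) + (if b' = x + k then 1 else 0)) : a = b := by
  have top : ∀ x, a ≤ x → b ≤ x → a' ≤ x → b' ≤ x →
      (if a = x then 1 else 0) + (if b' = x then 1 else 0) =
      (if a' = x then 1 else 0) + (if b = x then 1 else 0) := by
    intro x h1 h2 h3 h4
    have z1 : ¬ (a = x + k) := by omega
    have z2 : ¬ (a' = x + k) := by omega
    have z3 : ¬ (b = x + k) := by omega
    have z4 : ¬ (b' = x + k) := by omega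
    simpa [z1, z2, z3, z4] using key x
  by_contra hne
  by_cases e : a' = b'
  · subst e
    have top2 : ∀ x, a ≤ x → b ≤ x →
        (if a = x then 1 else 0) = (if b = x then 1 else 0) := by
      intro x h1 h2
      have z1 : ¬ (a = x + k) := by omega
      have z3 : ¬ (b = x + k) := by omega
      have := key x
      simp only [z1, z3, if_false] at this
      omega
    rcases lt_or_gt_of_ne hne with h | h
    · have := top2 b h.le le_rfl
      simp [hne] at this
    · have := top2 a le_rfl h.le
      simp [Ne.symm hne] at this
  · have t := top (max (max a b) (max a' b')) (by omega) (by omega) (by omega) (by omega)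
    generalize hx : max (max a b) (max a' b') = x at t
    split_ifs at t <;> omega

theorem dd_share {k : ℕ} (hk : 0 < k) {α α' β β' : Fin N → ℕ} (hα : StrictMono α)
    (hα' : StrictMono α') (hβ : StrictMono β) (hβ' : StrictMono β') (hne : α ≠ α')
    (h1 : dd k α β ≠ 0) (h2 : dd k α' β ≠ 0) (h3 : dd k α β' ≠ 0) (h4 : dd k α' β' ≠ 0) :
    β = β' := by
  obtain ⟨a, ha⟩ := dd_ne_zero h1
  obtain ⟨a', ha'⟩ := dd_ne_zero h2
  obtain ⟨b, hb⟩ := dd_ne_zero h3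
  obtain ⟨b', hb'⟩ := dd_ne_zero h4
  have n1 : a ≠ a' := by
    rintro rfl
    apply hne
    apply strict_cnt hα hα'
    intro x
    have := ha x
    have := ha' x
    omega
  have n2 : b ≠ b' := by
    rintro rfl
    apply hne
    apply strict_cnt hα hα'
    intro x
    have := hb x
    have := hb' x
    omega
  have key : ∀ x, (if a = x then 1 else 0) + (if a' = x + k then 1 else 0) +
      (if b' = x then 1 else 0) + (if b = x + k then 1 else 0) =
      (if a' = x then 1 else 0) + (if a = x + k then 1 else 0) +
      (if b = x then 1 else 0) + (if b' = x + k then 1 else 0) := by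
    intro x
    have := ha x
    have := ha' x
    have := hb x
    have := hb' x
    omega
  have hab : a = b := by
    exact dd_share_aux hk n1 n2 key
  subst hab
  apply strict_cnt hβ hβ'
  intro x
  have := ha x
  have := hb x
  omega

end AltDiv
end
section
set_option linter.unusedSectionVars false
open Finset
namespace AltDiv

section
variable {G W : Type*} [Group G] [Fintype G] [AddCommGroup W] [Module ℂ W] [FiniteDimensional ℂ W]

lemma idem_trace (e : W →ₗ[ℂ] W) (he : IsIdempotentElem e) :
    ∃ n : ℕ, LinearMap.trace ℂ W e = n :=
  ⟨_, (LinearMap.IsIdempotentElem.isProj_range e he).trace⟩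

lemma sum_char_nat (ρ : Representation ℂ G W) :
    ∃ n : ℕ, ∑ g, ρ.character g = (Fintype.card G : ℂ) * n := by
  have h0 : (Nat.card G : ℂ) ≠ 0 := by simp
  have := invertibleOfNonzero h0
  refine ⟨Module.finrank ℂ ρ.invariants, ?_⟩
  rw [← ρ.card_inv_mul_sum_char_eq_finrank, ← Nat.card_eq_fintype_card, mul_inv_cancel_left₀ h0]

lemma sum_char_mul_nat {W' : Type*} [AddCommGroup W'] [Module ℂ W'] [FiniteDimensional ℂ W']
    (ρ : Representation ℂ G W) (σ : Representation ℂ G W') :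
    ∃ n : ℕ, ∑ g, ρ.character g * σ.character g = (Fintype.card G : ℂ) * n := by
  obtain ⟨n, hn⟩ := sum_char_nat (ρ.tprod σ)
  exact ⟨n, by rw [← hn]; simp⟩

lemma sum_char_inv_nat {W' : Type*} [AddCommGroup W'] [Module ℂ W'] [FiniteDimensional ℂ W']
    (ρ : Representation ℂ G W) (σ : Representation ℂ G W') :
    ∃ n : ℕ, ∑ g, ρ.character g⁻¹ * σ.character g = (Fintype.card G : ℂ) * n := by
  obtain ⟨n, hn⟩ := sum_char_nat (ρ.linHom σ)
  exact ⟨n, by rw [← hn]; simp⟩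

/-- twist by linear character -/
noncomputable def twist (ρ : Representation ℂ G W) (l : G →* ℂ) : Representation ℂ G W where
  toFun g := l g • ρ g
  map_one' := by simp
  map_mul' a b := by rw [map_mul, map_mul, smul_mul_smul_comm]

lemma twist_char (ρ : Representation ℂ G W) (l : G →* ℂ) (g : G) :
    (twist ρ l).character g = l g * ρ.character g := by
  simp [twist, Representation.character]

lemma char_expand_comm {Z : Type*} [CommGroup Z] [Fintype Z] (ρ : Representation ℂ Z W) (g : Z) :
    ∃ (J : Type) (_ : Fintype J) (n : J → ℕ) (r : J → ℂ), (∀ j, ‖r j‖ = 1) ∧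
      (∀ j, IsIntegral ℤ (r j)) ∧ ρ.character g = ∑ j, n j * r j ∧
      ρ.character g⁻¹ = ∑ j, n j * (starRingEnd ℂ) (r j) := by
  classical
  let A := Additive Z
  have key : ∀ ψ : AddChar A ℂ, ∃ n : ℕ, ∑ z : Z, ψ (- Additive.ofMul z) * ρ.character z
      = (Fintype.card Z : ℂ) * n := by
    intro ψ
    let l : Z →* ℂ := ⟨⟨fun z => ψ (- Additive.ofMul z), by simp⟩, by
      intro x y; simp [neg_add, AddChar.map_add_eq_mul, mul_comm]⟩
    obtain ⟨n, hn⟩ := sum_char_nat (twist ρ l)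
    refine ⟨n, ?_⟩
    rw [← hn]
    refine Finset.sum_congr rfl fun z _ => ?_
    rw [twist_char]; rfl
  choose n hn using key
  have hZ : (Fintype.card Z : ℂ) ≠ 0 := by simp
  have inv : ∀ z : Z, ρ.character z = ∑ ψ : AddChar A ℂ, (n ψ : ℂ) * ψ (Additive.ofMul z) := by
    intro z
    have : (Fintype.card Z : ℂ) * ∑ ψ : AddChar A ℂ, (n ψ : ℂ) * ψ (Additive.ofMul z)
        = (Fintype.card Z : ℂ) * ρ.character z := by
      rw [Finset.mul_sum]
      simp_rw [← mul_assoc, ← hn, Finset.sum_mul]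
      rw [Finset.sum_comm]
      have : ∀ y : Z, ∑ ψ : AddChar A ℂ, ψ (-Additive.ofMul y) * ρ.character y * ψ (Additive.ofMul z)
        = if y = z then (Fintype.card Z : ℂ) * ρ.character z else 0 := by
        intro y
        have h2 := AddChar.sum_apply_eq_ite (α := A) (-Additive.ofMul y + Additive.ofMul z)
        have : ∀ ψ : AddChar A ℂ, ψ (-Additive.ofMul y) * ρ.character y * ψ (Additive.ofMul z)
          = ψ (-Additive.ofMul y + Additive.ofMul z) * ρ.character y := by
          intro ψ; rw [AddChar.map_add_eq_mul]; ring
        simp_rw [this, ← Finset.sum_mul, h2]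
        by_cases hyz : y = z
        · subst hyz; simp; left; exact Fintype.card_congr Additive.toMul
        · rw [if_neg hyz, if_neg, zero_mul]
          intro h; apply hyz
          have := neg_add_eq_zero.mp h
          exact this
      simp_rw [this]
      simp
    exact (mul_left_cancel₀ hZ this).symm
  let J := AddChar A ℂ
  let e : J ≃ Fin (Fintype.card J) := Fintype.equivFin J
  let g' : Z := g
  refine ⟨Fin (Fintype.card J), inferInstance, fun j => n (e.symm j), fun j => (e.symm j) (Additive.ofMul g'), ?_, ?_, ?_, ?_⟩
  · intro j; exact AddChar.norm_apply _ _
  · intro j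
    refine IsIntegral.of_pow (n := Fintype.card A) Fintype.card_pos ?_
    rw [← AddChar.map_nsmul_eq_pow, card_nsmul_eq_zero]
    simp [isIntegral_one]
  · rw [Equiv.sum_comp e.symm (fun ψ => (n ψ : ℂ) * ψ (Additive.ofMul g'))]
    exact inv g'
  · rw [Equiv.sum_comp e.symm (fun ψ => (n ψ : ℂ) * (starRingEnd ℂ) (ψ (Additive.ofMul g')))]
    have := inv g'⁻¹
    change ρ.character g⁻¹ = _ at this
    rw [this]
    refine Finset.sum_congr rfl fun ψ _ => ?_
    rw [ofMul_inv, AddChar.map_neg_eq_conj]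

lemma char_expand (ρ : Representation ℂ G W) (g : G) :
    ∃ (J : Type) (_ : Fintype J) (n : J → ℕ) (r : J → ℂ), (∀ j, ‖r j‖ = 1) ∧
      (∀ j, IsIntegral ℤ (r j)) ∧ ρ.character g = ∑ j, n j * r j ∧
      ρ.character g⁻¹ = ∑ j, n j * (starRingEnd ℂ) (r j) := by
  classical
  letI : CommGroup (Subgroup.zpowers g) :=
    { (inferInstance : Group (Subgroup.zpowers g)) with
      mul_comm := fun a b => mul_comm' a b }
  exact char_expand_comm (ρ.comp (Subgroup.zpowers g).subtype) ⟨g, Subgroup.mem_zpowers g⟩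

lemma char_integral (ρ : Representation ℂ G W) (g : G) : IsIntegral ℤ (ρ.character g) := by
  obtain ⟨J, _, n, r, h1, h2, h3, h4⟩ := char_expand ρ g
  rw [h3]
  refine IsIntegral.sum _ fun j _ => IsIntegral.mul ?_ (h2 j)
  exact_mod_cast isIntegral_algebraMap (R := ℤ) (A := ℂ) (x := n j)

lemma char_inv_eq (ρ : Representation ℂ G W) (g : G) :
    ρ.character g⁻¹ = (starRingEnd ℂ) (ρ.character g) := by
  obtain ⟨J, _, n, r, h1, h2, h3, h4⟩ := char_expand ρ g
  rw [h3, h4, map_sum]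
  simp

lemma central_char (ρ : Representation ℂ G W)
    (hρ : ∑ g, ρ.character g * ρ.character g⁻¹ = Fintype.card G) (a : G → ℤ)
    (ha : ∀ s g, a (s * g * s⁻¹) = a g) :
    ∃ ω : ℂ, IsIntegral ℤ ω ∧ ∑ g, (a g : ℂ) * ρ.character g = ρ.character 1 * ω := by
  have h0 : (Nat.card G : ℂ) ≠ 0 := by simp
  have := invertibleOfNonzero h0
  have hfin : Module.finrank ℂ (ρ.linHom ρ).invariants = 1 := by
    have := (ρ.linHom ρ).card_inv_mul_sum_char_eq_finrank
    simp_rw [Representation.char_linHom, mul_comm (ρ.character _⁻¹), hρ] at this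
    rw [← Nat.card_eq_fintype_card, inv_mul_cancel₀ h0] at this
    exact_mod_cast this.symm
  let id' : (ρ.linHom ρ).invariants := ⟨LinearMap.id, by intro g; ext; simp⟩
  let Z : W →ₗ[ℂ] W := ∑ g, (a g : ℂ) • ρ g
  have hZ : ∀ s, ρ s * Z * ρ s⁻¹ = Z := by
    intro s
    simp only [Z, Finset.mul_sum, Finset.sum_mul]
    rw [← Equiv.sum_comp (MulAut.conj s).toEquiv (fun g => (a g : ℂ) • ρ g)]
    refine Finset.sum_congr rfl fun g _ => ?_
    simp [MulAut.conj_apply, ha]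
  let Z' : (ρ.linHom ρ).invariants := ⟨Z, by
    intro s; have := hZ s; rw [mul_assoc] at this; rw [Representation.linHom_apply]; exact this⟩
  have hne : Nontrivial W := by
    by_contra h
    rw [not_nontrivial_iff_subsingleton] at h
    have : Subsingleton (ρ.linHom ρ).invariants := ⟨fun a b => by ext x; exact Subsingleton.elim _ _⟩
    rw [Module.finrank_zero_of_subsingleton] at hfin
    simp at hfin
  have hid : id' ≠ 0 := by
    intro h
    have : (LinearMap.id : W →ₗ[ℂ] W) = 0 := congrArg Subtype.val h
    obtain ⟨x, hx⟩ := exists_ne (0 : W)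
    exact hx (by simpa using LinearMap.congr_fun this x)
  obtain ⟨ω, hω⟩ := exists_smul_eq_of_finrank_eq_one hfin hid Z'
  have hω' : ω • (1 : Module.End ℂ W) = Z := congrArg Subtype.val hω
  refine ⟨ω, ?_, ?_⟩
  · have hint : IsIntegral ℤ (algebraMap ℂ (Module.End ℂ W) ω) := by
      rw [Algebra.algebraMap_eq_smul_one, hω']
      let F : MonoidAlgebra ℤ G →ₐ[ℤ] Module.End ℂ W := MonoidAlgebra.lift ℤ (Module.End ℂ W) G ρ
      have : Z = F (∑ g, a g • MonoidAlgebra.of ℤ G g) := by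
        simp only [Z, F, map_sum, map_smul, MonoidAlgebra.lift_of]
        refine Finset.sum_congr rfl fun g _ => ?_
        exact Int.cast_smul_eq_zsmul ℂ _ _
      rw [this]
      have : Module.Finite ℤ (MonoidAlgebra ℤ G) := inferInstance
      exact IsIntegral.map F (Algebra.IsIntegral.isIntegral _)
    exact (isIntegral_algebraMap_iff (algebraMap ℂ (Module.End ℂ W)).injective).mp hint
  · have h1 : LinearMap.trace ℂ W Z = ∑ g, (a g : ℂ) * ρ.character g := by
      simp [Z, Representation.character]
    rw [← h1, ← hω']
    simp [mul_comm]

/-- permutation representation -/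
noncomputable def permRep {X : Type*} (φ : G →* Equiv.Perm X) : Representation ℂ G (X → ℂ) where
  toFun g := LinearMap.funLeft ℂ ℂ (φ g⁻¹)
  map_one' := by ext; simp [LinearMap.funLeft]
  map_mul' a b := by ext; simp [LinearMap.funLeft]

lemma permRep_char {X : Type*} [Fintype X] [DecidableEq X] (φ : G →* Equiv.Perm X) (g : G) :
    (permRep φ).character g = #{x | φ g x = x} := by
  rw [Representation.character, LinearMap.trace_eq_matrix_trace ℂ (Pi.basisFun ℂ X)]
  simp [Matrix.trace, permRep, LinearMap.toMatrix_apply, LinearMap.funLeft, Pi.single_apply]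
  congr 1
  ext x
  simp only [mem_filter, mem_univ, true_and]
  rw [Equiv.symm_apply_eq, eq_comm]

lemma perm_char_sum (ρ : Representation ℂ G W) {X : Type*} [Fintype X] [DecidableEq X]
    (φ : G →* Equiv.Perm X) :
    ∃ n : ℕ, ∑ g, (#{x | φ g x = x} : ℂ) * ρ.character g = (Fintype.card G : ℂ) * n := by
  obtain ⟨n, hn⟩ := sum_char_mul_nat (permRep φ) ρ
  exact ⟨n, by rw [← hn]; simp_rw [permRep_char]⟩

end
end AltDiv
end
section
set_option linter.unusedSectionVars false
open Finset MvPolynomial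
namespace AltDiv

section
variable {ι W : Type*} [Fintype ι] [DecidableEq ι] [AddCommGroup W] [Module ℂ W]
  [FiniteDimensional ℂ W]

open Classical in
/-- extension by zero of a character of the alternating group -/
noncomputable def chh (ρ : Representation ℂ (alternatingGroup ι) W) (y : Equiv.Perm ι) : ℂ :=
  if h : y ∈ alternatingGroup ι then ρ.character ⟨y, h⟩ else 0

lemma chh_coe (ρ : Representation ℂ (alternatingGroup ι) W) (y : alternatingGroup ι) :
    chh ρ y = ρ.character y := by simp [chh]

lemma chh_odd (ρ : Representation ℂ (alternatingGroup ι) W) {y : Equiv.Perm ι}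
    (hy : y ∉ alternatingGroup ι) : chh ρ y = 0 := by simp [chh, hy]

lemma sum_chh (ρ : Representation ℂ (alternatingGroup ι) W) (f : Equiv.Perm ι → ℂ) :
    ∑ y, f y * chh ρ y = ∑ y : alternatingGroup ι, f y * ρ.character y := by
  classical
  rw [← Finset.sum_subset (Finset.subset_univ (univ.filter (fun y => y ∈ alternatingGroup ι)))]
  · rw [← Finset.sum_subtype_of_mem (p := fun y => y ∈ alternatingGroup ι) (fun y => f y * chh ρ y)]
    · apply Finset.sum_congr
      · ext a; simpa using Equiv.Perm.mem_alternatingGroup.mp a.2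
      · intro y _; exact congrArg _ (chh_coe ρ y)
    · simp
  · intro y _ hy
    rw [chh_odd, mul_zero]
    simpa using hy

lemma chh_conj (ρ : Representation ℂ (alternatingGroup ι) W) {s : Equiv.Perm ι}
    (hs : s ∈ alternatingGroup ι) (y : Equiv.Perm ι) : chh ρ (s * y * s⁻¹) = chh ρ y := by
  by_cases hy : y ∈ alternatingGroup ι
  · have := ρ.char_conj ⟨y, hy⟩ ⟨s, hs⟩
    rw [← chh_coe, ← chh_coe] at this
    exact this
  · rw [chh_odd ρ hy, chh_odd]
    intro h; apply hy
    simp only [Equiv.Perm.mem_alternatingGroup, map_mul, map_inv] at *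
    rw [hs] at h; simpa using h

lemma chh_inv (ρ : Representation ℂ (alternatingGroup ι) W) (y : Equiv.Perm ι) :
    chh ρ y⁻¹ = (starRingEnd ℂ) (chh ρ y) := by
  by_cases hy : y ∈ alternatingGroup ι
  · have := char_inv_eq ρ ⟨y, hy⟩
    rw [← chh_coe, ← chh_coe] at this
    exact this
  · rw [chh_odd ρ hy, chh_odd, map_zero]
    simpa using hy

/-- conjugate representation -/
noncomputable def conjRep (τ : Equiv.Perm ι) (ρ : Representation ℂ (alternatingGroup ι) W) :
    Representation ℂ (alternatingGroup ι) W :=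
  ρ.comp (MulAut.conjNormal τ).toMonoidHom

lemma chh_conjRep (τ : Equiv.Perm ι) (ρ : Representation ℂ (alternatingGroup ι) W)
    (y : Equiv.Perm ι) : chh (conjRep τ ρ) y = chh ρ (τ * y * τ⁻¹) := by
  by_cases hy : y ∈ alternatingGroup ι
  · have h1 := chh_coe (conjRep τ ρ) ⟨y, hy⟩
    have h2 := chh_coe ρ (MulAut.conjNormal τ ⟨y, hy⟩)
    rw [MulAut.conjNormal_apply] at h2
    exact h1.trans h2.symm
  · rw [chh_odd _ hy, chh_odd]
    intro h; apply hy
    simp only [Equiv.Perm.mem_alternatingGroup, map_mul, map_inv] at *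
    rw [mul_comm, inv_mul_cancel_left] at h; exact h

lemma chh_odd_conj (τ : Equiv.Perm ι) (hτ : Equiv.Perm.sign τ = -1)
    (ρ : Representation ℂ (alternatingGroup ι) W) {s : Equiv.Perm ι} (hs : Equiv.Perm.sign s = -1)
    (y : Equiv.Perm ι) : chh ρ (s * y * s⁻¹) = chh ρ (τ * y * τ⁻¹) := by
  have := chh_conj ρ (s := s * τ⁻¹) (by simp [hs, hτ]) (τ * y * τ⁻¹)
  rw [← this]; congr 1; group

/-- the induced character -/
noncomputable def Th (τ : Equiv.Perm ι) (ρ : Representation ℂ (alternatingGroup ι) W)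
    (y : Equiv.Perm ι) : ℂ := chh ρ y + chh ρ (τ * y * τ⁻¹)
/-- the difference character -/
noncomputable def De (τ : Equiv.Perm ι) (ρ : Representation ℂ (alternatingGroup ι) W)
    (y : Equiv.Perm ι) : ℂ := chh ρ y - chh ρ (τ * y * τ⁻¹)

variable (τ : Equiv.Perm ι)
  (ρ : Representation ℂ (alternatingGroup ι) W)

lemma Th_conj (hτ : Equiv.Perm.sign τ = -1) (s y : Equiv.Perm ι) : Th τ ρ (s * y * s⁻¹) = Th τ ρ y := by
  rcases Int.units_eq_one_or (Equiv.Perm.sign s) with hs | hs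
  · have h2 := chh_conj ρ (s := τ * s * τ⁻¹) (by simp [hs, hτ]) (τ * y * τ⁻¹)
    rw [Th, Th, chh_conj ρ (by simpa using hs), ← h2]; congr 2; group
  · have h2 := chh_conj ρ (s := τ * s) (by simp [hs, hτ]) y
    rw [Th, Th, chh_odd_conj τ hτ ρ hs, ← h2, add_comm]; simp only [mul_assoc, mul_inv_rev]

lemma De_conj (hτ : Equiv.Perm.sign τ = -1) (s y : Equiv.Perm ι) :
    De τ ρ (s * y * s⁻¹) = ((Equiv.Perm.sign s : ℤ) : ℂ) * De τ ρ y := by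
  rcases Int.units_eq_one_or (Equiv.Perm.sign s) with hs | hs
  · have h2 := chh_conj ρ (s := τ * s * τ⁻¹) (by simp [hs, hτ]) (τ * y * τ⁻¹)
    rw [De, De, chh_conj ρ (by simpa using hs), ← h2, hs]; simp [mul_assoc]
  · have h2 := chh_conj ρ (s := τ * s) (by simp [hs, hτ]) y
    rw [De, De, chh_odd_conj τ hτ ρ hs, ← h2, hs]; simp [mul_assoc]

lemma sum_conj_chh (f : Equiv.Perm ι → ℂ) (hf : ∀ s y, f (s * y * s⁻¹) = f y) :
    ∑ y, f y * Th τ ρ y = 2 * ∑ y : alternatingGroup ι, f y * ρ.character y := by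
  simp only [Th, mul_add, Finset.sum_add_distrib]
  rw [← sum_chh, two_mul]
  congr 1
  rw [← Equiv.sum_comp (MulAut.conj τ).toEquiv (fun g => f g * chh ρ g)]
  refine Finset.sum_congr rfl fun y _ => ?_
  simp [MulAut.conj_apply, hf]

lemma card_alt [Nontrivial ι] : (2 : ℂ) * Fintype.card (alternatingGroup ι) = (Fintype.card ι).factorial := by
  rw [← Fintype.card_perm]
  exact_mod_cast two_mul_card_alternatingGroup

lemma Th_class [Nontrivial ι] (hρ : ∑ g, ρ.character g * ρ.character g⁻¹ = Fintype.card (alternatingGroup ι))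
    (a : Equiv.Perm ι → ℤ) (ha : ∀ s y, a (s * y * s⁻¹) = a y) :
    ∃ ω : ℂ, IsIntegral ℤ ω ∧ ∑ y, (a y : ℂ) * Th τ ρ y = 2 * ρ.character 1 * ω := by
  obtain ⟨ω, h1, h2⟩ := central_char ρ hρ (fun y => a y) (fun s g => by simp [ha])
  refine ⟨ω, h1, ?_⟩
  rw [sum_conj_chh τ ρ (fun y => (a y : ℂ)) (fun s y => by rw [ha])]
  rw [h2]; ring

/-- action on words of given content -/
noncomputable def wordAct {N : ℕ} (μ : Fin N → ℕ) :
    Equiv.Perm ι →* Equiv.Perm {v : ι → Fin N // cnt v = μ} where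
  toFun g := ⟨fun v => ⟨v.1 ∘ ⇑(g⁻¹), by rw [cnt_comp]; exact v.2⟩,
    fun v => ⟨v.1 ∘ g, by rw [cnt_comp]; exact v.2⟩,
    fun v => by ext; simp, fun v => by ext; simp⟩
  map_one' := by ext; simp
  map_mul' a b := by ext; simp

lemma Th_psi [Nontrivial ι] {N : ℕ} (α : Fin N → ℕ) :
    ∃ m : ℤ, ∑ y, (psi α y : ℂ) * Th τ ρ y = (Fintype.card ι).factorial * m := by
  classical
  have h1 : ∀ μ : Fin N → ℕ, ∃ n : ℕ, ∑ y : alternatingGroup ι, (cf μ (P N (y : Equiv.Perm ι)) : ℂ)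
      * ρ.character y = Fintype.card (alternatingGroup ι) * n := by
    intro μ
    obtain ⟨n, hn⟩ := perm_char_sum ρ ((wordAct (ι := ι) μ).comp (alternatingGroup ι).subtype)
    refine ⟨n, ?_⟩
    rw [← hn]
    refine Finset.sum_congr rfl fun y _ => ?_
    congr 1
    rw [cf_P]
    norm_cast
    rw [← Finset.card_map (Function.Embedding.subtype _)]
    congr 1
    ext v
    simp only [mem_filter, mem_univ, true_and, Finset.mem_map, Function.Embedding.subtype_apply,
      Subtype.exists, exists_and_right, exists_eq_right]
    constructor
    · rintro ⟨h1, h2⟩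
      refine ⟨h2, ?_⟩
      apply Subtype.ext
      exact (comp_inv_iff _ _).mpr h1
    · rintro ⟨h2, h1⟩
      exact ⟨(comp_inv_iff _ _).mp (congrArg Subtype.val h1), h2⟩
  choose n hn using h1
  refine ⟨∑ w : Equiv.Perm (Fin N), (Equiv.Perm.sign w : ℤ) *
    if ∀ i, (w i : ℕ) ≤ α i then (n (α - fun i => (w i : ℕ)) : ℤ) else 0, ?_⟩
  rw [sum_conj_chh τ ρ (fun y => (psi α y : ℂ)) (fun s y => by rw [psi_conj])]
  simp_rw [psi_eq]
  push_cast
  rw [← card_alt, mul_assoc]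
  congr 1
  simp_rw [Finset.sum_mul]
  rw [Finset.sum_comm, Finset.mul_sum]
  refine Finset.sum_congr rfl fun w _ => ?_
  split_ifs
  · simp_rw [mul_assoc]
    rw [← Finset.mul_sum, hn]; ring
  · simp

lemma norm_facts [Nontrivial ι]
    (hρ : ∑ g, ρ.character g * ρ.character g⁻¹ = Fintype.card (alternatingGroup ι)) :
    ∃ d : ℕ, d ≤ 1 ∧ (∑ y, Th τ ρ y * Th τ ρ y⁻¹ = (Fintype.card ι).factorial * (1 + d)) ∧
      (∑ y, ‖De τ ρ y‖ ^ 2 = (Fintype.card ι).factorial * (1 - d)) := by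
  obtain ⟨d, hd⟩ := sum_char_inv_nat ρ (conjRep τ ρ)
  have e1 : ∑ y, chh ρ y⁻¹ * chh ρ y = Fintype.card (alternatingGroup ι) := by
    rw [sum_chh ρ (fun y => chh ρ y⁻¹), ← hρ]
    refine Finset.sum_congr rfl fun y _ => ?_
    rw [mul_comm, ← chh_coe ρ y⁻¹]; rfl
  have e2 : ∑ y, chh ρ y⁻¹ * chh ρ (τ * y * τ⁻¹) = Fintype.card (alternatingGroup ι) * d := by
    simp_rw [← chh_conjRep]
    rw [sum_chh (conjRep τ ρ) (fun y => chh ρ y⁻¹), ← hd]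
    refine Finset.sum_congr rfl fun y _ => ?_
    rw [← chh_coe ρ y⁻¹]; rfl
  have e3 : ∑ y, chh ρ (τ * y⁻¹ * τ⁻¹) * chh ρ y = Fintype.card (alternatingGroup ι) * d := by
    rw [← e2, ← Equiv.sum_comp (Equiv.inv _)]
    refine Finset.sum_congr rfl fun y _ => ?_
    simp [mul_comm]
  have e4 : ∑ y, chh ρ (τ * y⁻¹ * τ⁻¹) * chh ρ (τ * y * τ⁻¹) = Fintype.card (alternatingGroup ι) := by
    rw [← e1, ← Equiv.sum_comp (MulAut.conj τ).toEquiv (fun y => chh ρ y⁻¹ * chh ρ y)]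
    refine Finset.sum_congr rfl fun y _ => ?_
    simp [MulAut.conj_apply, mul_assoc]
  have t : (∑ y, Th τ ρ y * Th τ ρ y⁻¹ = (Fintype.card ι).factorial * (1 + d)) := by
    rw [← card_alt]
    have : ∀ y, Th τ ρ y * Th τ ρ y⁻¹ = chh ρ y⁻¹ * chh ρ y + chh ρ y⁻¹ * chh ρ (τ * y * τ⁻¹) +
      chh ρ (τ * y⁻¹ * τ⁻¹) * chh ρ y + chh ρ (τ * y⁻¹ * τ⁻¹) * chh ρ (τ * y * τ⁻¹) := by
      intro y; simp only [Th]; ring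
    simp_rw [this, Finset.sum_add_distrib, e1, e2, e3, e4]
    ring
  have t2 : (∑ y, ‖De τ ρ y‖ ^ 2 = (Fintype.card ι).factorial * (1 - (d : ℝ))) := by
    have h1 : ∀ y, ((‖De τ ρ y‖ ^ 2 : ℝ) : ℂ) = chh ρ y⁻¹ * chh ρ y - chh ρ y⁻¹ * chh ρ (τ * y * τ⁻¹) -
      chh ρ (τ * y⁻¹ * τ⁻¹) * chh ρ y + chh ρ (τ * y⁻¹ * τ⁻¹) * chh ρ (τ * y * τ⁻¹) := by
      intro y
      have : (starRingEnd ℂ) (De τ ρ y) = De τ ρ y⁻¹ := by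
        simp only [De, map_sub, ← chh_inv, mul_assoc, mul_inv_rev, inv_inv]
      push_cast
      rw [← Complex.conj_mul', this]
      simp only [De]; ring
    have : ((∑ y, ‖De τ ρ y‖ ^ 2 : ℝ) : ℂ) = (Fintype.card ι).factorial * (1 - (d : ℝ)) := by
      rw [Complex.ofReal_sum]
      simp_rw [h1, Finset.sum_add_distrib, Finset.sum_sub_distrib, e1, e2, e3, e4]
      rw [← card_alt]; push_cast; ring
    exact_mod_cast this
  refine ⟨d, ?_, t, t2⟩
  have : 0 ≤ ∑ y, ‖De τ ρ y‖ ^ 2 := Finset.sum_nonneg fun _ _ => by positivity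
  rw [t2] at this
  by_contra h
  have h2 : (2 : ℝ) ≤ d := by exact_mod_cast (by omega : 2 ≤ d)
  have h3 : (0 : ℝ) < (Fintype.card ι).factorial := by exact_mod_cast Nat.factorial_pos _
  nlinarith

lemma idem_De {J : Type*} [Fintype J] (a : J → ℂ) (y : J → Equiv.Perm ι)
    (hy : ∀ j, y j ∈ alternatingGroup ι)
    (he : IsIdempotentElem (∑ j, a j • MonoidAlgebra.of ℂ (Equiv.Perm ι) (y j))) :
    ∃ b : ℤ, ∑ j, a j * De τ ρ (y j) = b := by
  let E : MonoidAlgebra ℂ (alternatingGroup ι) := ∑ j, a j • MonoidAlgebra.of ℂ _ ⟨y j, hy j⟩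
  let F : MonoidAlgebra ℂ (alternatingGroup ι) →ₐ[ℂ] MonoidAlgebra ℂ (Equiv.Perm ι) :=
    MonoidAlgebra.mapDomainAlgHom ℂ ℂ (alternatingGroup ι).subtype
  have hF : Function.Injective F :=
    MonoidAlgebra.mapDomain_injective (alternatingGroup ι).subtype_injective
  have hE : IsIdempotentElem E := by
    apply hF
    have : F E = ∑ j, a j • MonoidAlgebra.of ℂ (Equiv.Perm ι) (y j) := by
      simp [E, F, map_sum, MonoidAlgebra.mapDomain_single]
    rw [map_mul, this]; exact he
  have key : ∀ σ : Representation ℂ (alternatingGroup ι) W, ∃ n : ℕ, ∑ j, a j * chh σ (y j) = n := by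
    intro σ
    let H : MonoidAlgebra ℂ (alternatingGroup ι) →ₐ[ℂ] Module.End ℂ W := MonoidAlgebra.lift ℂ _ _ σ
    obtain ⟨n, hn⟩ := idem_trace (H E) (by unfold IsIdempotentElem; rw [← map_mul, hE])
    refine ⟨n, ?_⟩
    rw [← hn]
    simp only [H, E, map_sum, map_smul, MonoidAlgebra.lift_of]
    refine Finset.sum_congr rfl fun j _ => ?_
    rw [smul_eq_mul]; congr 1
    exact chh_coe σ ⟨y j, hy j⟩
  obtain ⟨n, hn⟩ := key ρ
  obtain ⟨n', hn'⟩ := key (conjRep τ ρ)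
  refine ⟨n - n', ?_⟩
  simp_rw [chh_conjRep] at hn'
  push_cast
  rw [← hn, ← hn', ← Finset.sum_sub_distrib]
  refine Finset.sum_congr rfl fun j _ => ?_
  rw [De]; ring

end
end AltDiv
end
section
set_option linter.unusedSectionVars false
open Finset MvPolynomial
namespace AltDiv

lemma dvd_of_integral_mul {a b : ℤ} (ha : a ≠ 0) {ω : ℂ} (hω : IsIntegral ℤ ω)
    (h : (a : ℂ) * ω = b) : a ∣ b := by
  have ha' : (a : ℂ) ≠ 0 := by exact_mod_cast ha
  have h1 : ω = algebraMap ℚ ℂ ((b : ℚ) / a) := by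
    simp; field_simp; rw [mul_comm]; exact h
  rw [h1, isIntegral_algebraMap_iff (algebraMap ℚ ℂ).injective] at hω
  obtain ⟨y, hy⟩ := IsIntegrallyClosed.isIntegral_iff.mp hω
  refine ⟨y, ?_⟩
  have ha'' : (a : ℚ) ≠ 0 := by exact_mod_cast ha
  simp only [algebraMap_int_eq, eq_intCast] at hy
  field_simp at hy
  have : (y * a : ℤ) = b := by exact_mod_cast hy
  rw [← this, mul_comm]

lemma card_dvd_sum_of_invariant {G : Type*} [Group G] [Fintype G] (H : Subgroup G) (F : G → ℤ)
    (hF : ∀ t, ∀ u ∈ H, F (t * u) = F t) : (Nat.card H : ℤ) ∣ ∑ t, F t := by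
  classical
  let e := Subgroup.groupEquivQuotientProdSubgroup (s := H)
  have he : ∀ t, (e t).1 = (t : G ⧸ H) := fun t => rfl
  have h1 : ∀ t, F t = F (e t).1.out := by
    intro t
    rw [he]
    obtain ⟨u, hu⟩ := QuotientGroup.mk_out_eq_mul H t
    rw [hu, hF _ _ u.2]
  rw [Finset.sum_congr rfl (fun t _ => h1 t), Equiv.sum_comp e (fun p => F p.1.out),
    Fintype.sum_prod_type]
  simp only [Finset.sum_const, Finset.card_univ]
  refine Finset.dvd_sum fun q _ => ?_
  simp

section
variable {ι : Type*} [Fintype ι] [DecidableEq ι] {N : ℕ}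

lemma Th_expand (hN : Fintype.card ι ≤ N) (Θ : Equiv.Perm ι → ℂ)
    (hcl : ∀ s g, Θ (s * g * s⁻¹) = Θ g) (m : (Fin N → ℕ) → ℤ)
    (hm : ∀ α, ∑ y, (psi α y : ℂ) * Θ y = (Fintype.card ι).factorial * m α) (g : Equiv.Perm ι) :
    Θ g = ∑ α ∈ BB N (Fintype.card ι), (m α : ℂ) * psi α g := by
  classical
  rw [← sub_eq_zero]
  refine completeness hN (fun g => Θ g - ∑ α ∈ BB N (Fintype.card ι), (m α : ℂ) * psi α g) ?_ ?_ g
  · intro s g; simp only [hcl, psi_conj]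
  · have base : ∀ β ∈ BB N (Fintype.card ι),
        ∑ g, (Θ g - ∑ α ∈ BB N (Fintype.card ι), (m α : ℂ) * psi α g) * (psi β g : ℂ) = 0 := by
      intro β hβ
      simp_rw [sub_mul, Finset.sum_sub_distrib, Finset.sum_mul]
      rw [Finset.sum_comm, Finset.sum_congr rfl (fun g _ => mul_comm (Θ g) _), hm, sub_eq_zero]
      have : ∀ α ∈ BB N (Fintype.card ι), ∑ g : Equiv.Perm ι, (m α : ℂ) * psi α g * psi β g
        = if α = β then (Fintype.card ι).factorial * (m β : ℂ) else 0 := by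
        intro α hα
        have h := orth_BB (ι := ι) hα hβ
        simp_rw [mul_assoc, ← Finset.mul_sum]
        have h' : ∑ g : Equiv.Perm ι, (psi α g : ℂ) * psi β g = ((Fintype.card ι).factorial : ℂ) * if α = β then 1 else 0 := by
          exact_mod_cast h
        rw [h']
        split_ifs with h
        · subst h; ring
        · ring
      rw [Finset.sum_congr rfl this]
      simp [hβ]
    intro γ
    by_cases hγ : ∑ i, γ i = Fintype.card ι + ∑ i : Fin N, (i : ℕ)
    · simp_rw [psi_expand γ hγ]
      push_cast
      simp_rw [Finset.mul_sum]
      rw [Finset.sum_comm]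
      refine Finset.sum_eq_zero fun β hβ => ?_
      rw [← mul_zero (D β γ : ℂ), ← base β hβ, Finset.mul_sum]
      simp_rw [← Finset.mul_sum]
      rw [Finset.mul_sum]
      refine Finset.sum_congr rfl fun g _ => ?_
      ring
    · refine Finset.sum_eq_zero fun g _ => ?_
      rw [psi_eq_zero γ hγ]; simp

lemma Th_sq (Θ : Equiv.Perm ι → ℂ) (m : (Fin N → ℕ) → ℤ)
    (hm : ∀ α, ∑ y, (psi α y : ℂ) * Θ y = (Fintype.card ι).factorial * m α)
    (hex : ∀ g, Θ g = ∑ α ∈ BB N (Fintype.card ι), (m α : ℂ) * psi α g) :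
    ∑ y, Θ y * Θ y⁻¹ = (Fintype.card ι).factorial * (∑ α ∈ BB N (Fintype.card ι), m α ^ 2 : ℤ) := by
  have : ∀ y, Θ y⁻¹ = Θ y := by intro y; simp_rw [hex, psi_inv]
  simp_rw [this]
  have h2 : ∀ y, Θ y * Θ y = ∑ α ∈ BB N (Fintype.card ι), (m α : ℂ) * psi α y * Θ y := by
    intro y; rw [← Finset.sum_mul, ← hex]
  simp_rw [h2]
  rw [Finset.sum_comm]
  push_cast
  rw [Finset.mul_sum]
  refine Finset.sum_congr rfl fun α _ => ?_
  simp_rw [mul_assoc, ← Finset.mul_sum, hm]; ring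

lemma psi_split (p : ι → Prop) [DecidablePred p] [Nonempty {x // p x}]
    (c : Equiv.Perm {x // p x}) (hc : ∀ x y, c.SameCycle x y) (h : Equiv.Perm {x // ¬ p x})
    {α : Fin N → ℕ} (hα : α ∈ BB N (Fintype.card ι)) :
    psi α (Equiv.Perm.subtypeCongr c h) =
      ∑ β ∈ BB N (Fintype.card {x // ¬ p x}), dd (Fintype.card {x // p x}) α β * psi β h := by
  rw [psi_subtypeCongr α p c hc h]
  simp only [dd, Finset.sum_mul]
  rw [Finset.sum_comm]
  refine Finset.sum_congr rfl fun i _ => ?_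
  split_ifs with hi
  · apply psi_expand
    have h1 := (mem_BB.mp hα).1
    have h2 := Fintype.card_subtype_compl p
    have h3 := Fintype.card_subtype_le p
    have h4 : ∑ j, (α - Pi.single i (Fintype.card {x // p x}) : Fin N → ℕ) j + Fintype.card {x // p x} = ∑ j, α j := by
      have : ∑ j, (Pi.single i (Fintype.card {x // p x}) : Fin N → ℕ) j = Fintype.card {x // p x} := by
        simp
      nth_rewrite 2 [← this]
      rw [← Finset.sum_add_distrib]
      refine Finset.sum_congr rfl fun j _ => ?_
      by_cases hj : j = i
      · subst hj; simp [hi]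
      · simp [Pi.single_apply, hj]
    omega
  · simp

lemma cycle_dvd (Θ : Equiv.Perm ι → ℂ)
    (hcl : ∀ s g, Θ (s * g * s⁻¹) = Θ g) (m : (Fin N → ℕ) → ℤ)
    (hex : ∀ g, Θ g = ∑ α ∈ BB N (Fintype.card ι), (m α : ℂ) * psi α g)
    (f M : ℕ) (hf : f ≠ 0) (hfM : 2 * (f * M) = (Fintype.card ι).factorial)
    (hint : ∀ a : Equiv.Perm ι → ℤ, (∀ s y, a (s * y * s⁻¹) = a y) →
      ∃ ω : ℂ, IsIntegral ℤ ω ∧ ∑ y, (a y : ℂ) * Θ y = 2 * f * ω)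
    (p : ι → Prop) [DecidablePred p] [Nonempty {x // p x}]
    (c : Equiv.Perm {x // p x}) (hc : ∀ x y, c.SameCycle x y)
    {β : Fin N → ℕ} (hβ : β ∈ BB N (Fintype.card {x // ¬ p x})) :
    (orderOf c : ℤ) ∣ M * ∑ α ∈ BB N (Fintype.card ι), m α * dd (Fintype.card {x // p x}) α β := by
  classical
  set s : (Fin N → ℕ) → ℤ := fun β => ∑ α ∈ BB N (Fintype.card ι), m α * dd (Fintype.card {x // p x}) α β with hs
  change (orderOf c : ℤ) ∣ M * s β
  have hsplit : ∀ h, Θ (Equiv.Perm.subtypeCongr c h) =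
      ∑ β ∈ BB N (Fintype.card {x // ¬ p x}), (s β : ℂ) * psi β h := by
    intro h
    rw [hex]
    simp only [hs]
    push_cast
    simp_rw [Finset.sum_mul]
    rw [Finset.sum_comm]
    refine Finset.sum_congr rfl fun α hα => ?_
    rw [psi_split p c hc h hα]
    push_cast
    rw [Finset.mul_sum]
    refine Finset.sum_congr rfl fun β _ => ?_
    ring
  let z : Equiv.Perm ι → ℤ := fun y => ∑ h : Equiv.Perm {x // ¬ p x},
    if y = Equiv.Perm.subtypeCongr c h then psi β h else 0
  let H : Subgroup (Equiv.Perm ι) :=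
    ((Subgroup.zpowers c).prod ⊤).map (Equiv.Perm.subtypeCongrHom p)
  have hH : Nat.card H = orderOf c * (Fintype.card {x // ¬ p x}).factorial := by
    rw [Subgroup.card_map_of_injective (Equiv.Perm.subtypeCongrHom_injective p)]
    rw [Nat.card_congr (Subgroup.prodEquiv _ _).toEquiv, Nat.card_prod, Nat.card_zpowers]
    simp [Fintype.card_perm]
  have hz : ∀ u ∈ H, ∀ y, z (u⁻¹ * y * u) = z y := by
    intro u hu y
    obtain ⟨⟨c', h'⟩, hm', rfl⟩ := Subgroup.mem_map.mp hu
    have hc' : c' ∈ Subgroup.zpowers c := hm'.1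
    have hcomm : c' * c * c'⁻¹ = c := by
      obtain ⟨i, rfl⟩ := Subgroup.mem_zpowers_iff.mp hc'
      group
    simp only [z]
    rw [← Equiv.sum_comp (MulAut.conj h').toEquiv (fun h => if y = c.subtypeCongr h then psi β h else 0)]
    refine Finset.sum_congr rfl fun h _ => ?_
    simp only [MulEquiv.toEquiv_eq_coe, EquivLike.coe_coe, MulAut.conj_apply, psi_conj]
    congr 1
    apply propext
    have e1 : ∀ h, c.subtypeCongr h = Equiv.Perm.subtypeCongrHom p (c, h) := fun _ => rfl
    rw [e1, e1]
    have e2 : (c, h' * h * h'⁻¹) = (c', h') * (c, h) * (c', h')⁻¹ := by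
      simp [hcomm]
    rw [e2, map_mul, map_mul, map_inv]
    constructor
    · intro hh; rw [← hh]; group
    · intro hh; rw [hh]; group
  let b : Equiv.Perm ι → ℤ := fun y => ∑ t, z (t⁻¹ * y * t)
  have hb : ∀ y, (Nat.card H : ℤ) ∣ b y := by
    intro y
    refine card_dvd_sum_of_invariant H (fun t => z (t⁻¹ * y * t)) ?_
    intro t u hu
    have := hz u hu (t⁻¹ * y * t)
    change z ((t * u)⁻¹ * y * (t * u)) = z (t⁻¹ * y * t)
    rw [← this]; simp only [mul_assoc, mul_inv_rev]
  choose b' hb' using hb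
  have hHne : (Nat.card H : ℤ) ≠ 0 := by simp
  have hbc : ∀ s y, b' (s * y * s⁻¹) = b' y := by
    intro s y
    apply mul_left_cancel₀ hHne
    rw [← hb', ← hb']
    simp only [b]
    rw [← Equiv.sum_comp (Equiv.mulLeft s)]
    refine Finset.sum_congr rfl fun t _ => ?_
    congr 1; simp [mul_assoc]
  obtain ⟨ω, hω, hsum⟩ := hint b' hbc
  have h1 : ∑ y, (b y : ℂ) * Θ y = (Fintype.card ι).factorial * ∑ y, (z y : ℂ) * Θ y := by
    simp only [b]
    push_cast
    simp_rw [Finset.sum_mul]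
    rw [Finset.sum_comm]
    have : ∀ t : Equiv.Perm ι, ∑ y, (z (t⁻¹ * y * t) : ℂ) * Θ y = ∑ y, (z y : ℂ) * Θ y := by
      intro t
      rw [← Equiv.sum_comp (MulAut.conj t).toEquiv (fun y => (z (t⁻¹ * y * t) : ℂ) * Θ y)]
      refine Finset.sum_congr rfl fun y _ => ?_
      have h5 := hcl t y
      simp only [mul_assoc] at h5
      simp [MulAut.conj_apply, h5, mul_assoc]
    simp_rw [this]
    simp [Fintype.card_perm]
  have h2 : ∑ y, (z y : ℂ) * Θ y = (Fintype.card {x // ¬ p x}).factorial * s β := by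
    simp only [z]
    push_cast
    simp_rw [Finset.sum_mul]
    rw [Finset.sum_comm]
    simp only [apply_ite (Int.cast : ℤ → ℂ), Int.cast_zero, ite_mul, zero_mul, Finset.sum_ite_eq', Finset.sum_ite_eq, Finset.mem_univ, if_true]
    simp_rw [hsplit, Finset.mul_sum]
    rw [Finset.sum_comm]
    have : ∀ γ ∈ BB N (Fintype.card {x // ¬ p x}),
        ∑ h : Equiv.Perm {x // ¬ p x}, (psi β h : ℂ) * ((s γ : ℂ) * psi γ h)
        = if γ = β then (Fintype.card {x // ¬ p x}).factorial * (s β : ℂ) else 0 := by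
      intro γ hγ
      have h := orth_BB (ι := {x // ¬ p x}) hβ hγ
      have h' : ∑ g : Equiv.Perm {x // ¬ p x}, (psi β g : ℂ) * psi γ g = ((Fintype.card {x // ¬ p x}).factorial : ℂ) * if β = γ then 1 else 0 := by
        exact_mod_cast h
      simp_rw [mul_left_comm _ (s γ : ℂ), ← Finset.mul_sum, h']
      by_cases hh : γ = β
      · subst hh; simp; ring
      · rw [if_neg hh, if_neg (Ne.symm hh)]; ring
    rw [Finset.sum_congr rfl this]
    rw [Finset.sum_ite_eq', if_pos hβ]
  have h3 : ∑ y, (b y : ℂ) * Θ y = (Nat.card H : ℂ) * (2 * f * ω) := by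
    rw [← hsum, Finset.mul_sum]
    refine Finset.sum_congr rfl fun y _ => ?_
    rw [hb']; push_cast; ring
  have hord : (orderOf c : ℤ) ≠ 0 := by exact_mod_cast (orderOf_pos c).ne'
  apply dvd_of_integral_mul hord hω
  rw [h1, h2, hH, ← hfM] at h3
  have hfac : ((Fintype.card {x // ¬ p x}).factorial : ℂ) ≠ 0 := by exact_mod_cast Nat.factorial_ne_zero _
  have hf' : (f : ℂ) ≠ 0 := by exact_mod_cast hf
  have : ((2 * f * (Fintype.card {x // ¬ p x}).factorial : ℕ) : ℂ) * ((orderOf c : ℤ) * ω) = ((2 * f * (Fintype.card {x // ¬ p x}).factorial : ℕ) : ℂ) * ((M * s β : ℤ) : ℂ) := by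
    push_cast at h3 ⊢
    linear_combination -h3
  refine mul_left_cancel₀ ?_ this
  push_cast
  exact mul_ne_zero (mul_ne_zero two_ne_zero hf') hfac
  
end
end AltDiv
end
section
set_option linter.unusedSectionVars false
open Finset MvPolynomial
namespace AltDiv

section
variable {ι : Type*} [Fintype ι] [DecidableEq ι] {N : ℕ}

lemma sign_of_even_order (c : Equiv.Perm ι) (hc : ∀ x y, c.SameCycle x y)
    (he : Even (orderOf c)) : Equiv.Perm.sign c = -1 := by
  have h1 : c ≠ 1 := by
    rintro rfl; simp at he
  obtain ⟨x, hx⟩ : ∃ x, c x ≠ x := by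
    by_contra h; push Not at h; exact h1 (Equiv.ext h)
  have hcyc : c.IsCycle := ⟨x, hx, fun y _ => hc x y⟩
  rw [hcyc.sign, ← hcyc.orderOf, he.neg_one_pow]

lemma abs_le_sq (x : ℤ) : |x| ≤ x ^ 2 := by
  rw [← sq_abs]
  have := abs_nonneg x
  rcases this.eq_or_lt with h | h
  · rw [← h]; simp
  · nlinarith

/-- combinatorial core -/
lemma core_two {A : Type*} [DecidableEq A] (B : Finset A) (m e : A → ℤ) (hsq : ∑ α ∈ B, m α ^ 2 ≤ 2)
    (he : ∀ α ∈ B, |e α| ≤ 1) (h : 2 ≤ |∑ α ∈ B, m α * e α|) :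
    ∃ α α', α ≠ α' ∧ B.filter (fun α => m α ≠ 0) = {α, α'} ∧
      ∀ γ ∈ B, m γ ≠ 0 → e γ ≠ 0 := by
  have hm : ∀ α ∈ B, |m α| ≤ 1 := by
    intro α hα
    have h1 : m α ^ 2 ≤ 2 := le_trans (Finset.single_le_sum (f := fun α => m α ^ 2) (fun i _ => sq_nonneg _) hα) hsq
    rw [abs_le]; constructor <;> nlinarith
  have hS : #(B.filter (fun α => m α ≠ 0)) ≤ 2 := by
    have : (#(B.filter (fun α => m α ≠ 0)) : ℤ) ≤ ∑ α ∈ B, m α ^ 2 := by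
      rw [Finset.card_filter]
      push_cast
      refine Finset.sum_le_sum fun α _ => ?_
      split_ifs with hh
      · have := sq_nonneg (m α)
        have : m α ^ 2 ≠ 0 := pow_ne_zero _ hh
        omega
      · positivity
    omega
  have hS2 : 2 ≤ #(B.filter (fun α => m α * e α ≠ 0)) := by
    have : |∑ α ∈ B, m α * e α| ≤ (#(B.filter (fun α => m α * e α ≠ 0)) : ℤ) := by
      refine (Finset.abs_sum_le_sum_abs _ _).trans ?_
      rw [Finset.card_filter]
      push_cast
      refine Finset.sum_le_sum fun α hα => ?_
      split_ifs with hh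
      · rw [abs_mul]
        have h1 := hm α hα; have h2 := he α hα
        have := abs_nonneg (m α); have := abs_nonneg (e α)
        nlinarith
      · push Not at hh; rw [hh]; simp
    omega
  have hsub : B.filter (fun α => m α * e α ≠ 0) ⊆ B.filter (fun α => m α ≠ 0) := by
    intro α; simp only [mem_filter]; rintro ⟨h1, h2⟩; exact ⟨h1, left_ne_zero_of_mul h2⟩
  have heq := Finset.eq_of_subset_of_card_le hsub (hS.trans hS2)
  have hc2 : #(B.filter (fun α => m α ≠ 0)) = 2 := by rw [heq] at hS2; omega
  obtain ⟨α, α', hne, hh⟩ := Finset.card_eq_two.mp hc2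
  refine ⟨α, α', hne, hh, ?_⟩
  intro γ hγ hmγ
  have : γ ∈ B.filter (fun α => m α * e α ≠ 0) := by rw [heq]; simp [hγ, hmγ]
  exact right_ne_zero_of_mul (mem_filter.mp this).2

lemma order_dvd (Θ : Equiv.Perm ι → ℂ)
    (hcl : ∀ s g, Θ (s * g * s⁻¹) = Θ g) (m : (Fin N → ℕ) → ℤ)
    (hex : ∀ g, Θ g = ∑ α ∈ BB N (Fintype.card ι), (m α : ℂ) * psi α g)
    (f M : ℕ) (hf : f ≠ 0) (hfM : 2 * (f * M) = (Fintype.card ι).factorial)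
    (hint : ∀ a : Equiv.Perm ι → ℤ, (∀ s y, a (s * y * s⁻¹) = a y) →
      ∃ ω : ℂ, IsIntegral ℤ ω ∧ ∑ y, (a y : ℂ) * Θ y = 2 * f * ω)
    (hsq : ∑ α ∈ BB N (Fintype.card ι), m α ^ 2 ≤ 2)
    (hodd : ∀ y, Equiv.Perm.sign y = -1 → Θ y = 0)
    (p : ι → Prop) [DecidablePred p] [Nonempty {x // p x}]
    (c : Equiv.Perm {x // p x}) (hc : ∀ x y, c.SameCycle x y) (h : Equiv.Perm {x // ¬ p x})
    (hne : Θ (Equiv.Perm.subtypeCongr c h) ≠ 0) : orderOf c ∣ M := by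
  classical
  set k := Fintype.card {x // p x} with hk
  have hk0 : 0 < k := Fintype.card_pos
  set s : (Fin N → ℕ) → ℤ := fun β => ∑ α ∈ BB N (Fintype.card ι), m α * dd k α β with hs
  have hdvd : ∀ β ∈ BB N (Fintype.card {x // ¬ p x}), (orderOf c : ℤ) ∣ M * s β := fun β hβ =>
    cycle_dvd Θ hcl m hex f M hf hfM hint p c hc hβ
  have hsplit : ∀ h, Θ (Equiv.Perm.subtypeCongr c h) =
      ∑ β ∈ BB N (Fintype.card {x // ¬ p x}), (s β : ℂ) * psi β h := by
    intro h
    rw [hex]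
    simp only [hs]
    push_cast
    simp_rw [Finset.sum_mul]
    rw [Finset.sum_comm]
    refine Finset.sum_congr rfl fun α hα => ?_
    rw [psi_split p c hc h hα]
    push_cast
    rw [Finset.mul_sum]
    refine Finset.sum_congr rfl fun β _ => ?_
    ring
  have hdd : ∀ β ∈ BB N (Fintype.card {x // ¬ p x}), ∀ α ∈ BB N (Fintype.card ι), |dd k α β| ≤ 1 := by
    intro β hβ α hα
    rcases dd_cases hk0 (mem_BB.mp hα).2 (mem_BB.mp hβ).2 with h | h | h <;> rw [h] <;> simp
  have hle : ∀ β ∈ BB N (Fintype.card {x // ¬ p x}), |s β| ≤ 2 := by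
    intro β hβ
    refine le_trans ?_ hsq
    refine (Finset.abs_sum_le_sum_abs _ _).trans (Finset.sum_le_sum fun α hα => ?_)
    rw [abs_mul]
    have := hdd β hβ α hα
    have := abs_le_sq (m α)
    have := abs_nonneg (m α)
    nlinarith
  obtain ⟨β0, hβ0, hsβ0⟩ : ∃ β ∈ BB N (Fintype.card {x // ¬ p x}), s β ≠ 0 := by
    by_contra hcon
    push Not at hcon
    apply hne
    rw [hsplit]
    refine Finset.sum_eq_zero fun β hβ => ?_
    rw [hcon β hβ]; simp
  by_cases h1 : ∃ β ∈ BB N (Fintype.card {x // ¬ p x}), |s β| = 1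
  · obtain ⟨β, hβ, hb⟩ := h1
    have := hdvd β hβ
    rw [← dvd_abs, abs_mul, hb] at this
    have : (orderOf c : ℤ) ∣ (M : ℤ) := by simpa using this
    exact_mod_cast this
  push Not at h1
  have h2 : ∀ β ∈ BB N (Fintype.card {x // ¬ p x}), s β ≠ 0 → |s β| = 2 := by
    intro β hβ hb
    have := hle β hβ; have := h1 β hβ; have := abs_pos.mpr hb
    omega
  rcases Nat.even_or_odd (orderOf c) with hev | hod
  · exfalso
    have hc1 := sign_of_even_order c hc hev
    have hz := hodd (Equiv.Perm.subtypeCongr c 1) (by rw [Equiv.Perm.sign_subtypeCongr, hc1]; simp)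
    rw [hsplit, Finset.sum_eq_single_of_mem β0 hβ0] at hz
    · have := psi_one_ne_zero hβ0
      rcases mul_eq_zero.mp hz with h | h
      · exact hsβ0 (by exact_mod_cast h)
      · exact this (by exact_mod_cast h)
    · intro β hβ hneβ
      by_cases hsb : s β = 0
      · rw [hsb]; simp
      exfalso
      apply hneβ
      obtain ⟨α, α', hαα, hS, hnz⟩ := core_two _ m (fun α => dd k α β) hsq (hdd β hβ) (h2 β hβ hsb).ge
      obtain ⟨_, _, _, _, hnz0⟩ := core_two _ m (fun α => dd k α β0) hsq (hdd β0 hβ0) (h2 β0 hβ0 hsβ0).ge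
      have ha : α ∈ (BB N (Fintype.card ι)).filter (fun α => m α ≠ 0) := by rw [hS]; simp
      have ha' : α' ∈ (BB N (Fintype.card ι)).filter (fun α => m α ≠ 0) := by rw [hS]; simp
      rw [mem_filter] at ha ha'
      exact dd_share hk0 (mem_BB.mp ha.1).2 (mem_BB.mp ha'.1).2 (mem_BB.mp hβ).2 (mem_BB.mp hβ0).2 hαα
        (hnz _ ha.1 ha.2) (hnz _ ha'.1 ha'.2) (hnz0 _ ha.1 ha.2) (hnz0 _ ha'.1 ha'.2)
  · have := hdvd β0 hβ0
    rw [← dvd_abs, abs_mul, h2 β0 hβ0 hsβ0] at this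
    have h3 : orderOf c ∣ M * 2 := by
      have : ((orderOf c : ℕ) : ℤ) ∣ ((M * 2 : ℕ) : ℤ) := by simpa using this
      exact_mod_cast this
    exact (Nat.Coprime.dvd_of_dvd_mul_right (Nat.coprime_two_right.mpr hod) h3)

lemma pow_eq_one_of_cycles (M : ℕ) (g : Equiv.Perm ι)
    (H : ∀ (p : ι → Prop) [DecidablePred p] [Nonempty {x // p x}] (c : Equiv.Perm {x // p x})
      (h : Equiv.Perm {x // ¬ p x}), (∀ x y, c.SameCycle x y) → g = Equiv.Perm.subtypeCongr c h →
      orderOf c ∣ M) : orderOf g ∣ M := by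
  classical
  apply orderOf_dvd_of_pow_eq_one
  ext x
  let p : ι → Prop := fun y => g.SameCycle x y
  have hp : ∀ y, p (g y) ↔ p y := fun y => Equiv.Perm.sameCycle_apply_right
  have hnp : ∀ y, ¬ p (g y) ↔ ¬ p y := fun y => not_congr (hp y)
  haveI : Nonempty {y // p y} := ⟨⟨x, Equiv.Perm.SameCycle.refl _ _⟩⟩
  have hM := H p (g.subtypePerm hp) (g.subtypePerm hnp) (by
    rintro ⟨a, ha⟩ ⟨b, hb⟩
    have : g.SameCycle a b := ha.symm.trans hb
    obtain ⟨i, hi⟩ := this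
    refine ⟨i, ?_⟩
    rw [Equiv.Perm.subtypePerm_zpow]
    apply Subtype.ext
    simpa using hi) (by
    ext y
    by_cases hy : p y
    · rw [Equiv.Perm.subtypeCongr.left_apply _ _ hy]; rfl
    · rw [Equiv.Perm.subtypeCongr.right_apply _ _ hy]; rfl)
  have := orderOf_dvd_iff_pow_eq_one.mp hM
  rw [Equiv.Perm.subtypePerm_pow] at this
  have := congrArg Subtype.val (Equiv.congr_fun this ⟨x, Equiv.Perm.SameCycle.refl _ _⟩)
  simpa using this

variable {W : Type*} [AddCommGroup W] [Module ℂ W] [FiniteDimensional ℂ W]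

lemma exists_M [Nontrivial ι] (τ : Equiv.Perm ι) (hτ : Equiv.Perm.sign τ = -1)
    (ρ : Representation ℂ (alternatingGroup ι) W)
    (hρ : ∑ g, ρ.character g * ρ.character g⁻¹ = Fintype.card (alternatingGroup ι)) :
    ∃ M : ℕ, Fintype.card (alternatingGroup ι) = Module.finrank ℂ W * M ∧
      ∀ g, Th τ ρ g ≠ 0 → orderOf g ∣ M := by
  classical
  set N := Fintype.card ι with hN
  have hcl := Th_conj τ ρ hτ
  choose m hm using fun α : Fin N → ℕ => Th_psi τ ρ α
  have hex := Th_expand hN.ge (Th τ ρ) hcl m hm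
  obtain ⟨d, hd1, hd2, -⟩ := norm_facts τ ρ hρ
  have hfac : ((Fintype.card ι).factorial : ℂ) ≠ 0 := by exact_mod_cast Nat.factorial_ne_zero _
  have hsq : ∑ α ∈ BB N (Fintype.card ι), m α ^ 2 = 1 + d := by
    have h1 := Th_sq (Th τ ρ) m hm hex
    rw [hd2] at h1
    have := mul_left_cancel₀ hfac h1
    exact_mod_cast this.symm
  have hint : ∀ a : Equiv.Perm ι → ℤ, (∀ s y, a (s * y * s⁻¹) = a y) →
      ∃ ω : ℂ, IsIntegral ℤ ω ∧ ∑ y, (a y : ℂ) * Th τ ρ y = 2 * (Module.finrank ℂ W : ℂ) * ω := by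
    intro a ha
    have := Th_class τ ρ hρ a ha
    rwa [Representation.char_one] at this
  have hcardne : (Fintype.card (alternatingGroup ι) : ℂ) ≠ 0 := Nat.cast_ne_zero.mpr Fintype.card_ne_zero
  have hf : Module.finrank ℂ W ≠ 0 := by
    intro h0
    have : Subsingleton W := Module.finrank_zero_iff.mp h0
    apply hcardne
    rw [← hρ]
    refine Finset.sum_eq_zero fun g _ => ?_
    have : ρ.character g = 0 := by
      rw [Representation.character, show ρ g = 0 from Subsingleton.elim _ _, map_zero]
    rw [this, zero_mul]
  obtain ⟨α, hα, hα1⟩ : ∃ α ∈ BB N (Fintype.card ι), |m α| = 1 := by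
    by_contra hcon
    push Not at hcon
    have hz : ∀ α ∈ BB N (Fintype.card ι), m α = 0 := by
      intro α hα
      have h1 : m α ^ 2 ≤ 1 + d := le_trans (Finset.single_le_sum (f := fun α => m α ^ 2) (fun i _ => sq_nonneg _) hα) hsq.le
      have h2 := hcon α hα
      by_contra hne
      have h3 := abs_pos.mpr hne
      have h4 : 2 ≤ |m α| := by omega
      rw [← sq_abs] at h1
      have : (d : ℤ) ≤ 1 := by exact_mod_cast hd1
      nlinarith
    rw [Finset.sum_eq_zero (fun α hα => by rw [hz α hα]; rfl)] at hsq
    omega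
  have hdiv : Module.finrank ℂ W ∣ Fintype.card (alternatingGroup ι) := by
    obtain ⟨ω, hω, hs⟩ := hint (psi α) (psi_conj α)
    rw [hm, ← card_alt] at hs
    have h1 : ((Module.finrank ℂ W : ℤ) : ℂ) * ω = ((Fintype.card (alternatingGroup ι) * m α : ℤ) : ℂ) := by
      push_cast
      have : (2 : ℂ) * (Module.finrank ℂ W * ω) = 2 * (Fintype.card (alternatingGroup ι) * m α) := by
        linear_combination -hs
      exact mul_left_cancel₀ two_ne_zero this
    have h2 := dvd_of_integral_mul (by exact_mod_cast hf) hω h1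
    rw [← dvd_abs, abs_mul, hα1] at h2
    simp only [Nat.abs_cast, mul_one] at h2
    exact_mod_cast h2
  obtain ⟨M, hM⟩ := hdiv
  refine ⟨M, hM, ?_⟩
  intro g hg
  have hfM : 2 * (Module.finrank ℂ W * M) = (Fintype.card ι).factorial := by
    rw [← hM]; exact_mod_cast card_alt (ι := ι)
  apply pow_eq_one_of_cycles
  intro p _ _ c h hc hgc
  refine order_dvd (Th τ ρ) hcl m hex _ M hf hfM hint ?_ ?_ p c hc h (by rwa [← hgc])
  · rw [hsq]; exact_mod_cast (by omega : 1 + d ≤ 2)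
  · intro y hy
    rw [Th, chh_odd, chh_odd, add_zero]
    · simp [hy, hτ]
    · simp [hy]

end
end AltDiv
end
section
set_option linter.unusedSectionVars false
open Finset
namespace AltDiv

/-- sign-twisted class functions -/
def AI {T : Type} [Fintype T] [DecidableEq T] (F : Equiv.Perm T → ℂ) : Prop :=
  ∀ s y, F (s * y * s⁻¹) = ((Equiv.Perm.sign s : ℤ) : ℂ) * F y

/-- existence of a good idempotent -/
def LS {T : Type} [Fintype T] [DecidableEq T] (σ : Equiv.Perm T) (Q : ℕ) : Prop :=
  ∃ (J : Type) (_ : Fintype J) (a : J → ℂ) (y : J → Equiv.Perm T),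
    (∀ j, Equiv.Perm.sign (y j) = 1) ∧
    IsIdempotentElem (∑ j, a j • MonoidAlgebra.of ℂ (Equiv.Perm T) (y j)) ∧
    ∃ u : ℂ, (u ^ 2 * Q = 1 ∨ u ^ 2 * Q = -1) ∧
      ∀ F : Equiv.Perm T → ℂ, AI F → ∑ j, a j * F (y j) = u * F σ

lemma LS_one {T : Type} [Fintype T] [DecidableEq T] : LS (1 : Equiv.Perm T) 1 := by
  refine ⟨Unit, inferInstance, fun _ => 1, fun _ => 1, by simp, ?_, 1, by simp, by simp⟩
  simp only [Finset.univ_unique, Finset.sum_singleton, map_one, one_smul]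
  exact IsIdempotentElem.one

lemma LS_transport {T X : Type} [Fintype T] [DecidableEq T] [Fintype X] [DecidableEq X]
    (e : T ≃ X) {σ : Equiv.Perm T} {Q : ℕ} (h : LS σ Q) : LS (e.permCongr σ) Q := by
  obtain ⟨J, hJ, a, y, hy, hid, u, hu, hF⟩ := h
  refine ⟨J, hJ, a, fun j => e.permCongr (y j), ?_, ?_, u, hu, ?_⟩
  · intro j; rw [Equiv.Perm.sign_permCongr, hy]
  · let φ := MonoidAlgebra.mapDomainAlgHom ℂ ℂ (e.permCongrHom.toMonoidHom)
    have : ∑ j, a j • MonoidAlgebra.of ℂ (Equiv.Perm X) (e.permCongr (y j)) =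
      φ (∑ j, a j • MonoidAlgebra.of ℂ (Equiv.Perm T) (y j)) := by
      simp [φ, map_sum, MonoidAlgebra.mapDomain_single]
    rw [this]
    exact hid.map φ
  · intro F hAI
    refine hF (fun y => F (e.permCongr y)) ?_
    intro s y
    have := hAI (e.permCongr s) (e.permCongr y)
    rw [Equiv.Perm.sign_permCongr] at this
    rw [← this]
    change F _ = F _
    refine congrArg F ?_
    have hm := fun a b => map_mul e.permCongrHom a b
    have hi := map_inv e.permCongrHom s
    have h1 := hm (s * y) s⁻¹
    rw [hi, hm s y] at h1
    exact h1

lemma LS_combine {T : Type} [Fintype T] [DecidableEq T] (p : T → Prop) [DecidablePred p]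
    {c : Equiv.Perm {x // p x}} {h : Equiv.Perm {x // ¬ p x}} {Q Q' : ℕ}
    (hc : LS c Q) (hh : LS h Q') : LS (Equiv.Perm.subtypeCongr c h) (Q * Q') := by
  obtain ⟨J, hJ, a, y, hy, hid, u, hu, hF⟩ := hc
  obtain ⟨J', hJ', a', y', hy', hid', u', hu', hF'⟩ := hh
  have hom : ∀ a b c d, Equiv.Perm.subtypeCongr (p := p) a b * Equiv.Perm.subtypeCongr c d
      = Equiv.Perm.subtypeCongr (a * c) (b * d) := fun a b c d =>
    ((Equiv.Perm.subtypeCongrHom p).map_mul (a, b) (c, d)).symm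
  have hinv : ∀ a b, (Equiv.Perm.subtypeCongr (p := p) a b)⁻¹
      = Equiv.Perm.subtypeCongr a⁻¹ b⁻¹ := fun a b =>
    ((Equiv.Perm.subtypeCongrHom p).map_inv (a, b)).symm
  refine ⟨J × J', inferInstance, fun j => a j.1 * a' j.2,
    fun j => Equiv.Perm.subtypeCongr (y j.1) (y' j.2), ?_, ?_, u * u', ?_, ?_⟩
  · intro j; rw [Equiv.Perm.sign_subtypeCongr, hy, hy', one_mul]
  · let f1 := (Equiv.Perm.subtypeCongrHom p).comp (MonoidHom.inl _ _)
    let f2 := (Equiv.Perm.subtypeCongrHom p).comp (MonoidHom.inr _ _)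
    let φ1 := MonoidAlgebra.mapDomainAlgHom ℂ ℂ f1
    let φ2 := MonoidAlgebra.mapDomainAlgHom ℂ ℂ f2
    have e1 : φ1 (∑ j, a j • MonoidAlgebra.of ℂ _ (y j)) = ∑ j, a j • MonoidAlgebra.of ℂ _ (f1 (y j)) := by
      simp [φ1, map_sum, MonoidAlgebra.mapDomain_single]
    have e2 : φ2 (∑ j, a' j • MonoidAlgebra.of ℂ _ (y' j)) = ∑ j, a' j • MonoidAlgebra.of ℂ _ (f2 (y' j)) := by
      simp [φ2, map_sum, MonoidAlgebra.mapDomain_single]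
    have hf : ∀ a b, f1 a * f2 b = Equiv.Perm.subtypeCongr a b := by
      intro a b
      change Equiv.Perm.subtypeCongr a 1 * Equiv.Perm.subtypeCongr 1 b = _
      rw [hom, mul_one, one_mul]
    have hf' : ∀ a b, f2 b * f1 a = Equiv.Perm.subtypeCongr a b := by
      intro a b
      change Equiv.Perm.subtypeCongr 1 b * Equiv.Perm.subtypeCongr a 1 = _
      rw [hom, mul_one, one_mul]
    have e3 : ∑ j : J × J', (a j.1 * a' j.2) • MonoidAlgebra.of ℂ (Equiv.Perm T) (Equiv.Perm.subtypeCongr (y j.1) (y' j.2))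
      = φ1 (∑ j, a j • MonoidAlgebra.of ℂ _ (y j)) * φ2 (∑ j, a' j • MonoidAlgebra.of ℂ _ (y' j)) := by
      rw [e1, e2, Finset.sum_mul_sum, Fintype.sum_prod_type]
      refine Finset.sum_congr rfl fun i _ => Finset.sum_congr rfl fun j _ => ?_
      rw [smul_mul_smul_comm, ← map_mul, hf]
    rw [e3]
    refine IsIdempotentElem.mul_of_commute ?_ (hid.map φ1) (hid'.map φ2)
    rw [e1, e2]
    refine Commute.sum_left _ _ _ fun i _ => Commute.sum_right _ _ _ fun j _ => ?_
    refine Commute.smul_left (Commute.smul_right ?_ _) _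
    change _ * _ = _ * _
    rw [← map_mul, ← map_mul, hf, hf']
  · have : (u * u') ^ 2 * ((Q * Q' : ℕ) : ℂ) = (u ^ 2 * Q) * (u' ^ 2 * Q') := by push_cast; ring
    rw [this]
    rcases hu with h | h <;> rcases hu' with h' | h' <;> rw [h, h'] <;> simp
  · intro F hAI
    rw [Fintype.sum_prod_type]
    have h1 : ∀ w, ∑ j, a' j * F (Equiv.Perm.subtypeCongr w (y' j)) = u' * F (Equiv.Perm.subtypeCongr w h) := by
      intro w
      refine hF' (fun v => F (Equiv.Perm.subtypeCongr w v)) ?_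
      intro s v
      have := hAI (Equiv.Perm.subtypeCongr 1 s) (Equiv.Perm.subtypeCongr w v)
      rw [Equiv.Perm.sign_subtypeCongr, map_one, one_mul] at this
      rw [← this, hinv, hom, hom]; simp
    have h2 : ∑ j, a j * F (Equiv.Perm.subtypeCongr (y j) h) = u * F (Equiv.Perm.subtypeCongr c h) := by
      refine hF (fun v => F (Equiv.Perm.subtypeCongr v h)) ?_
      intro s v
      have := hAI (Equiv.Perm.subtypeCongr s 1) (Equiv.Perm.subtypeCongr v h)
      rw [Equiv.Perm.sign_subtypeCongr, map_one, mul_one] at this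
      rw [← this, hinv, hom, hom]; simp
    simp_rw [mul_assoc, ← Finset.mul_sum, h1]
    rw [mul_left_comm, ← h2, Finset.mul_sum]
    refine Finset.sum_congr rfl fun j _ => ?_
    ring
end AltDiv
end
section
set_option linter.unusedSectionVars false
open Finset
namespace AltDiv

/-- multiplication by units as permutations -/
def mu (p : ℕ) : (ZMod p)ˣ →* Equiv.Perm (ZMod p) := MulAction.toPermHom (ZMod p)ˣ (ZMod p)

lemma mu_apply (p : ℕ) (r : (ZMod p)ˣ) (x : ZMod p) : mu p r x = (r : ZMod p) * x := rfl

lemma exists_odd_mu (p : ℕ) [Fact p.Prime] (hp : p ≠ 2) : ∃ r, Equiv.Perm.sign (mu p r) = -1 := by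
  have hpp : p.Prime := Fact.out
  obtain ⟨g, hg⟩ := IsCyclic.exists_generator (α := (ZMod p)ˣ)
  have hg1 : (g : ZMod p) ≠ 1 := by
    intro h
    have h1 : g = 1 := Units.ext h
    have : (-1 : (ZMod p)ˣ) = 1 := by
      have := hg (-1)
      rw [h1] at this
      simpa using this
    have h2 : (-1 : ZMod p) = 1 := by
      have := congrArg Units.val this
      simpa using this
    haveI : Fact (2 < p) := ⟨lt_of_le_of_ne hpp.two_le (Ne.symm hp)⟩
    exact ZMod.neg_one_ne_one h2
  refine ⟨g, ?_⟩
  have hc : (mu p g).IsCycle := by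
    refine ⟨1, ?_, ?_⟩
    · rw [mu_apply, mul_one]; exact hg1
    · intro y hy
      have hy0 : y ≠ 0 := by rintro rfl; simp [mu_apply] at hy
      obtain ⟨i, hi⟩ := Subgroup.mem_zpowers_iff.1 (hg (Units.mk0 y hy0))
      refine ⟨i, ?_⟩
      rw [← map_zpow, hi, mu_apply]; simp
  have hs : (mu p g).support = univ.erase 0 := by
    ext y
    simp only [Equiv.Perm.mem_support, mu_apply, mem_erase, mem_univ, and_true]
    constructor
    · rintro h rfl; simp at h
    · intro h h'; exact hg1 (mul_right_cancel₀ h (h'.trans (one_mul y).symm))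
  rw [hc.sign, hs, card_erase_of_mem (mem_univ _), card_univ, ZMod.card]
  have : Even (p - 1) := hpp.even_sub_one hp
  rw [this.neg_one_pow]

/-- the sign character -/
noncomputable def eta (p : ℕ) [Fact p.Prime] : MulChar (ZMod p) ℂ :=
  MulChar.ofUnitHom ((Units.map (Int.castRingHom ℂ).toMonoidHom).comp (Equiv.Perm.sign.comp (mu p)))

lemma eta_unit (p : ℕ) [Fact p.Prime] (r : (ZMod p)ˣ) :
    eta p r = ((Equiv.Perm.sign (mu p r) : ℤ) : ℂ) := by
  rw [eta, MulChar.ofUnitHom_coe]; rfl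

lemma eta_zero (p : ℕ) [Fact p.Prime] : eta p 0 = 0 :=
  MulChar.map_nonunit _ (by simp)

lemma eta_gauss (p : ℕ) [Fact p.Prime] (hp : p ≠ 2) :
    gaussSum (eta p) ZMod.stdAddChar ^ 2 = p ∨ gaussSum (eta p) ZMod.stdAddChar ^ 2 = -p := by
  have hne : eta p ≠ 1 := by
    intro h
    obtain ⟨r, hr⟩ := exists_odd_mu p hp
    have := eta_unit p r
    rw [h, hr, MulChar.one_apply_coe] at this
    norm_num at this
  have hu : ∀ r : (ZMod p)ˣ, eta p r = 1 ∨ eta p r = -1 := by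
    intro r
    rw [eta_unit]
    rcases Int.units_eq_one_or (Equiv.Perm.sign (mu p r)) with h | h <;> rw [h] <;> simp
  have hq : (eta p).IsQuadratic := by
    intro a
    by_cases ha : a = 0
    · left; rw [ha, eta_zero]
    · right; exact hu (Units.mk0 a ha)
  have := gaussSum_sq hne hq (ZMod.isPrimitive_stdAddChar p)
  rw [ZMod.card] at this
  rcases hu (-1) with h | h <;> rw [Units.val_neg, Units.val_one] at h <;> rw [h] at this
  · left; simpa using this
  · right; simpa using this

section
variable {A : Type} [Fintype A] [DecidableEq A] {p : ℕ} [Fact p.Prime]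

def be (b : A → ZMod p) : Equiv.Perm (A × ZMod p) :=
  Equiv.prodCongrRight fun x => Equiv.addRight (b x)
def io (w : Equiv.Perm A) : Equiv.Perm (A × ZMod p) := Equiv.prodCongrLeft fun _ => w
def dl (r : (ZMod p)ˣ) : Equiv.Perm (A × ZMod p) := Equiv.prodCongrRight fun _ => mu p r

lemma be_apply (b : A → ZMod p) (x : A × ZMod p) : be b x = (x.1, x.2 + b x.1) := by
  obtain ⟨x, z⟩ := x; rfl
lemma io_apply (w : Equiv.Perm A) (x : A × ZMod p) : io w x = (w x.1, x.2) := by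
  obtain ⟨x, z⟩ := x; rfl
lemma dl_apply (r : (ZMod p)ˣ) (x : A × ZMod p) : dl r x = (x.1, r * x.2) := by
  obtain ⟨x, z⟩ := x; rfl

lemma be_add (b d : A → ZMod p) : be b * be d = be (b + d) := by
  ext x <;> simp [be_apply, Equiv.Perm.mul_apply]; ring
lemma io_mul (b d : Equiv.Perm A) : (io b * io d : Equiv.Perm (A × ZMod p)) = io (b * d) := by
  ext x <;> simp [io_apply, Equiv.Perm.mul_apply]
lemma be_zero : (be 0 : Equiv.Perm (A × ZMod p)) = 1 := by
  ext x <;> simp [be_apply]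
lemma io_one : (io 1 : Equiv.Perm (A × ZMod p)) = 1 := by
  ext x <;> simp [io_apply]
lemma be_inv (b : A → ZMod p) : (be b)⁻¹ = be (-b) :=
  inv_eq_of_mul_eq_one_right (by rw [be_add, add_neg_cancel, be_zero])
lemma io_inv (b : Equiv.Perm A) : (io b : Equiv.Perm (A × ZMod p))⁻¹ = io b⁻¹ :=
  inv_eq_of_mul_eq_one_right (by rw [io_mul, mul_inv_cancel, io_one])
lemma io_be (w : Equiv.Perm A) (b : A → ZMod p) : io w * be b = be (b ∘ ⇑w⁻¹) * io w := by
  ext x <;> simp [io_apply, be_apply, Equiv.Perm.mul_apply]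
lemma dl_be (r : (ZMod p)ˣ) (b : A → ZMod p) : dl r * be b = be (fun x => (r : ZMod p) * b x) * dl r := by
  ext x <;> simp [dl_apply, be_apply, Equiv.Perm.mul_apply]; ring
lemma dl_io (r : (ZMod p)ˣ) (w : Equiv.Perm A) : dl r * io w = io w * dl r := by
  ext x <;> simp [dl_apply, io_apply, Equiv.Perm.mul_apply]

lemma sign_be (hp : p ≠ 2) (b : A → ZMod p) : Equiv.Perm.sign (be b) = 1 := by
  have h2 : (2 : ZMod p) ≠ 0 := by
    haveI : Fact (2 < p) := ⟨lt_of_le_of_ne (Fact.out : p.Prime).two_le (Ne.symm hp)⟩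
    exact Ring.two_ne_zero (by rw [ZMod.ringChar_zmod_n]; exact hp)
  have : b = (fun x => b x / 2) + (fun x => b x / 2) := by
    ext x; simp only [Pi.add_apply]; field_simp; ring
  rw [this, ← be_add, map_mul]
  exact Int.units_mul_self _
lemma sign_io (hp : p ≠ 2) (w : Equiv.Perm A) :
    Equiv.Perm.sign (io w : Equiv.Perm (A × ZMod p)) = Equiv.Perm.sign w := by
  rw [io, Equiv.Perm.sign_prodCongrLeft]
  simp only [prod_const, card_univ, ZMod.card]
  obtain ⟨k, hk⟩ := (Fact.out : p.Prime).odd_of_ne_two hp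
  rw [hk, pow_succ, pow_mul, Int.units_sq, one_pow, one_mul]
lemma sign_dl (hA : Odd (Fintype.card A)) (r : (ZMod p)ˣ) :
    Equiv.Perm.sign (dl r : Equiv.Perm (A × ZMod p)) = Equiv.Perm.sign (mu p r) := by
  rw [dl, Equiv.Perm.sign_prodCongrRight]
  simp only [prod_const, card_univ]
  obtain ⟨k, hk⟩ := hA
  rw [hk, pow_succ, pow_mul, Int.units_sq, one_pow, one_mul]

end
end AltDiv
end
section
set_option linter.unusedSectionVars false
open Finset
namespace AltDiv
section
variable {A : Type} [Fintype A] [DecidableEq A] {p : ℕ} [Fact p.Prime]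

lemma avg (x0 : A) (φ : ZMod p → ℂ) :
    (p : ℂ) * ∑ b : A → ZMod p, φ (∑ x, b x) = (Fintype.card (A → ZMod p) : ℂ) * ∑ s, φ s := by
  have h1 : ∀ s : ZMod p, ∑ b : A → ZMod p, φ (∑ x, b x) = ∑ b : A → ZMod p, φ ((∑ x, b x) + s) := by
    intro s
    rw [← Equiv.sum_comp (Equiv.addRight (Pi.single x0 s : A → ZMod p))]
    refine sum_congr rfl fun b _ => ?_
    simp [sum_add_distrib]
  have h2 : ∑ s : ZMod p, ∑ b : A → ZMod p, φ (∑ x, b x) = ∑ b : A → ZMod p, ∑ s, φ s := by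
    rw [sum_congr rfl fun s _ => h1 s, sum_comm]
    refine sum_congr rfl fun b _ => ?_
    exact Equiv.sum_comp (Equiv.addLeft (∑ x, b x)) φ
  simpa [ZMod.card] using h2

/-- coboundaries -/
lemma cob (c : Equiv.Perm A) (x0 : A) (ht : ∀ x, c.SameCycle x0 x) (b : A → ZMod p) :
    ∃ d : A → ZMod p, b = Pi.single x0 (∑ x, b x) + (d - d ∘ ⇑c⁻¹) := by
  classical
  let K : AddSubgroup (A → ZMod p) :=
    { carrier := {f | ∃ d : A → ZMod p, f = d - d ∘ ⇑c⁻¹}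
      zero_mem' := ⟨0, by ext; simp⟩
      add_mem' := by
        rintro _ _ ⟨d, rfl⟩ ⟨d', rfl⟩
        exact ⟨d + d', by ext; simp; ring⟩
      neg_mem' := by
        rintro _ ⟨d, rfl⟩
        exact ⟨-d, by ext; simp; ring⟩ }
  have hstep : ∀ x t, (Pi.single x t - Pi.single (c x) t : A → ZMod p) ∈ K := by
    intro x t
    refine ⟨Pi.single x t, ?_⟩
    ext y
    simp only [Pi.sub_apply, Function.comp, Pi.single_apply, Equiv.Perm.inv_eq_iff_eq]
  have hpow : ∀ (i : ℕ) t, (Pi.single ((c ^ i) x0) t - Pi.single x0 t : A → ZMod p) ∈ K := by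
    intro i t
    induction i with
    | zero => simp
    | succ i ih =>
      have := K.sub_mem ih (hstep ((c ^ i) x0) t)
      rw [pow_succ', Equiv.Perm.mul_apply]
      convert this using 1
      abel
  have hx : ∀ x t, (Pi.single x t - Pi.single x0 t : A → ZMod p) ∈ K := by
    intro x t
    obtain ⟨i, hi⟩ := (ht x).exists_nat_pow_eq
    rw [← hi]; exact hpow i t
  have hb : b - Pi.single x0 (∑ x, b x) ∈ K := by
    have e1 : b - Pi.single x0 (∑ x, b x) = ∑ x, (Pi.single x (b x) - Pi.single x0 (b x) : A → ZMod p) := by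
      rw [sum_sub_distrib, Finset.univ_sum_single]
      congr 1
      exact map_sum (AddMonoidHom.single (fun _ : A => ZMod p) x0) b univ
    rw [e1]
    exact K.sum_mem fun x _ => hx x _
  obtain ⟨d, hd⟩ := hb
  exact ⟨d, by rw [← hd]; abel⟩

lemma F_sum (hp : p ≠ 2) (F : Equiv.Perm (A × ZMod p) → ℂ) (hF : AI F)
    (c : Equiv.Perm A) (x0 : A) (ht : ∀ x, c.SameCycle x0 x) (b : A → ZMod p) :
    F (be b * io c) = F (be (Pi.single x0 (∑ x, b x)) * io c) := by
  obtain ⟨d, hd⟩ := cob c x0 ht b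
  have h := hF (be d) (be (Pi.single x0 (∑ x, b x)) * io c)
  rw [sign_be hp] at h
  simp only [Units.val_one, Int.cast_one, one_mul] at h
  rw [← h, be_inv]
  refine congrArg F ?_
  rw [mul_assoc, mul_assoc, io_be, ← mul_assoc, ← mul_assoc, be_add, be_add]
  congr 2
  conv_lhs => rw [hd]
  ext x; simp; ring

lemma F_eta (hp : p ≠ 2) (hA : Odd (Fintype.card A)) (F : Equiv.Perm (A × ZMod p) → ℂ) (hF : AI F)
    (c : Equiv.Perm A) (x0 : A) (s : ZMod p) :
    F (be (Pi.single x0 s) * io c) = eta p s * F (be (Pi.single x0 1) * io c) := by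
  have key : ∀ (r : (ZMod p)ˣ) (t : ZMod p), F (be (Pi.single x0 ((r : ZMod p) * t)) * io c) =
      eta p r * F (be (Pi.single x0 t) * io c) := by
    intro r t
    have h := hF (dl r) (be (Pi.single x0 t) * io c)
    rw [sign_dl hA, ← eta_unit] at h
    rw [← h]
    refine congrArg F ?_
    rw [← mul_assoc, dl_be, mul_assoc (be _), dl_io, ← mul_assoc (be _), mul_inv_cancel_right]
    congr 2
    ext x
    by_cases hx : x = x0
    · subst hx; simp
    · simp [hx]
  by_cases hs : s = 0
  · subst hs
    obtain ⟨r, hr⟩ := exists_odd_mu p hp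
    have h := key r 0
    rw [eta_unit, hr, mul_zero] at h
    rw [eta_zero, zero_mul]
    have h' : F (be (Pi.single x0 0) * io c) = - F (be (Pi.single x0 0) * io c) := by
      conv_lhs => rw [h]
      simp
    exact self_eq_neg.1 h'
  · have h := key (Units.mk0 s hs) 1
    rw [mul_one] at h
    exact h

lemma idem_prod (e' : MonoidAlgebra ℂ (Equiv.Perm (A × ZMod p))) {J : Type} [Fintype J] (a : J → ℂ)
    (y : J → Equiv.Perm A) (he' : e' = ∑ j, a j • MonoidAlgebra.of ℂ _ (io (y j)))
    (hid : IsIdempotentElem e') (lam : AddChar (ZMod p) ℂ) :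
    IsIdempotentElem ((∑ b : A → ZMod p, ((Fintype.card (A → ZMod p) : ℂ)⁻¹ * lam (∑ x, b x)) •
      MonoidAlgebra.of ℂ (Equiv.Perm (A × ZMod p)) (be b)) * e') := by
  have hq : (Fintype.card (A → ZMod p) : ℂ) ≠ 0 := by
    exact_mod_cast Fintype.card_ne_zero
  refine IsIdempotentElem.mul_of_commute ?_ ?_ hid
  · rw [he']
    refine Commute.sum_right _ _ _ fun j _ => Commute.smul_right ?_ _
    change _ * _ = _ * _
    rw [sum_mul, mul_sum, ← (Equiv.arrowCongr (y j) (Equiv.refl (ZMod p))).sum_comp]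
    refine sum_congr rfl fun b _ => ?_
    rw [smul_mul_assoc, mul_smul_comm, ← map_mul, ← map_mul, io_be]
    congr 2
    simp only [Equiv.arrowCongr_apply, Function.comp, Equiv.refl_apply]
    rw [Equiv.sum_comp (y j).symm b]
  · unfold IsIdempotentElem
    rw [sum_mul]
    have : ∀ b : A → ZMod p, (((Fintype.card (A → ZMod p) : ℂ)⁻¹ * lam (∑ x, b x)) •
      MonoidAlgebra.of ℂ (Equiv.Perm (A × ZMod p)) (be b)) * (∑ b : A → ZMod p, ((Fintype.card (A → ZMod p) : ℂ)⁻¹ * lam (∑ x, b x)) •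
      MonoidAlgebra.of ℂ (Equiv.Perm (A × ZMod p)) (be b)) = (Fintype.card (A → ZMod p) : ℂ)⁻¹ • (∑ b : A → ZMod p, ((Fintype.card (A → ZMod p) : ℂ)⁻¹ * lam (∑ x, b x)) •
      MonoidAlgebra.of ℂ (Equiv.Perm (A × ZMod p)) (be b)) := by
      intro b
      rw [mul_sum, smul_sum]
      refine Fintype.sum_equiv (Equiv.addLeft b) _ _ fun d => ?_
      rw [smul_mul_smul_comm, ← map_mul, be_add, smul_smul]
      congr 1
      simp only [Equiv.coe_addLeft, Pi.add_apply, sum_add_distrib, AddChar.map_add_eq_mul]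
      ring
    rw [sum_congr rfl fun b _ => this b, sum_const, card_univ, ← Nat.cast_smul_eq_nsmul ℂ, smul_smul,
      mul_inv_cancel₀ hq, one_smul]

lemma LS_prod (hp : p ≠ 2) (hA : Odd (Fintype.card A)) (c : Equiv.Perm A) (x0 : A)
    (ht : ∀ x, c.SameCycle x0 x) {Q : ℕ} (h : LS c Q) :
    LS (be (Pi.single x0 (1 : ZMod p)) * io c) (p * Q) := by
  obtain ⟨J, hJ, a, y, hy, hid, u, hu, hF⟩ := h
  have hq : (Fintype.card (A → ZMod p) : ℂ) ≠ 0 := by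
    exact_mod_cast Fintype.card_ne_zero
  have hp0 : (p : ℂ) ≠ 0 := by exact_mod_cast (Fact.out : p.Prime).ne_zero
  set lam : AddChar (ZMod p) ℂ := ZMod.stdAddChar with hlam
  refine ⟨(A → ZMod p) × J, inferInstance,
    fun j => ((Fintype.card (A → ZMod p) : ℂ)⁻¹ * lam (∑ x, j.1 x)) * a j.2,
    fun j => be j.1 * io (y j.2), ?_, ?_, u * gaussSum (eta p) lam / p, ?_, ?_⟩
  · intro j; rw [map_mul, sign_be hp, sign_io hp, hy, one_mul]
  · let ioH : Equiv.Perm A →* Equiv.Perm (A × ZMod p) :=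
      { toFun := io, map_one' := io_one, map_mul' := fun a b => (io_mul a b).symm }
    let φ := MonoidAlgebra.mapDomainAlgHom ℂ ℂ ioH
    have e1 : φ (∑ j, a j • MonoidAlgebra.of ℂ _ (y j)) = ∑ j, a j • MonoidAlgebra.of ℂ _ (io (y j)) := by
      simp [φ, ioH, map_sum, MonoidAlgebra.mapDomain_single]
    have := idem_prod _ a y e1 (hid.map φ) lam
    rw [e1, Finset.sum_mul_sum] at this
    rw [Fintype.sum_prod_type]
    convert this using 5 with b _ j _
    rw [smul_mul_smul_comm, ← map_mul]
  · have h2 : (u * gaussSum (eta p) lam / p) ^ 2 * ((p * Q : ℕ) : ℂ) =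
      (u ^ 2 * Q) * (gaussSum (eta p) lam ^ 2 / p) := by push_cast; field_simp
    rw [h2]
    rcases eta_gauss p hp with h | h <;> rw [← hlam] at h <;> rcases hu with h' | h' <;>
      rw [h, h'] <;> simp [neg_div, hp0]
  · intro F hAI
    have h1 := hF (fun w => ∑ b : A → ZMod p, ((Fintype.card (A → ZMod p) : ℂ)⁻¹ * lam (∑ x, b x)) *
      F (be b * io w)) ?_
    · rw [Fintype.sum_prod_type, sum_comm]
      have h2 : ∀ j, ∑ b : A → ZMod p, ((Fintype.card (A → ZMod p) : ℂ)⁻¹ * lam (∑ x, b x)) * a j *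
          F (be b * io (y j)) = a j * ∑ b : A → ZMod p, ((Fintype.card (A → ZMod p) : ℂ)⁻¹ * lam (∑ x, b x)) *
          F (be b * io (y j)) := by
        intro j; rw [mul_sum]; refine sum_congr rfl fun b _ => ?_; ring
      rw [sum_congr rfl fun j _ => h2 j, h1]
      have h3 : ∑ b : A → ZMod p, ((Fintype.card (A → ZMod p) : ℂ)⁻¹ * lam (∑ x, b x)) * F (be b * io c)
        = (Fintype.card (A → ZMod p) : ℂ)⁻¹ * (∑ b : A → ZMod p,
          (fun s => eta p s * lam s) (∑ x, b x)) * F (be (Pi.single x0 1) * io c) := by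
        rw [mul_sum, sum_mul]
        refine sum_congr rfl fun b _ => ?_
        rw [F_sum hp F hAI c x0 ht b, F_eta hp hA F hAI]
        ring
      have h4 := avg x0 (fun s : ZMod p => eta p s * lam s)
      rw [h3]
      have h5 : ∑ b : A → ZMod p, (fun s => eta p s * lam s) (∑ x, b x) =
        (Fintype.card (A → ZMod p) : ℂ) * gaussSum (eta p) lam / p := by
        rw [eq_div_iff hp0, mul_comm, h4]; rfl
      rw [h5]
      field_simp
    · intro s w
      simp only
      rw [mul_sum, ← (Equiv.arrowCongr s (Equiv.refl (ZMod p))).sum_comp]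
      refine sum_congr rfl fun b _ => ?_
      have h := hAI (io s) (be b * io w)
      rw [sign_io hp] at h
      have h' : io s * (be b * io w) * (io s)⁻¹ = be (b ∘ ⇑s⁻¹) * io (s * w * s⁻¹) := by
        rw [← mul_assoc (io s), io_be, io_inv, mul_assoc (be _), io_mul, mul_assoc (be _), io_mul]
      rw [mul_left_comm, ← h, h']
      simp only [Equiv.arrowCongr_apply, Function.comp, Equiv.refl_apply]
      rw [Equiv.sum_comp s.symm b]
      rfl

end
end AltDiv
end
section
set_option linter.unusedSectionVars false
open Finset
namespace AltDiv

lemma trans_step {A : Type} [Fintype A] [DecidableEq A] {p : ℕ} [Fact p.Prime]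
    (c : Equiv.Perm A) (x0 : A) (ht : ∀ x, c.SameCycle x0 x) (y : A × ZMod p) :
    (be (Pi.single x0 (1 : ZMod p)) * io c).SameCycle (x0, 0) y := by
  set σ : Equiv.Perm (A × ZMod p) := be (Pi.single x0 (1 : ZMod p)) * io c with hσ
  have happ : ∀ x z, σ (x, z) = (c x, z + if c x = x0 then 1 else 0) := by
    intro x z
    rw [hσ, Equiv.Perm.mul_apply, io_apply, be_apply]
    simp only [Pi.single_apply]
  clear_value σ
  have hfst : ∀ (i : ℕ) x z, ((σ ^ i) (x, z)).1 = (c ^ i) x := by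
    intro i
    induction i with
    | zero => intro x z; rfl
    | succ i ih =>
      intro x z
      rw [pow_succ, pow_succ, Equiv.Perm.mul_apply, Equiv.Perm.mul_apply, happ, ih]
  have hex : ∃ m, 0 < m ∧ (c ^ m) x0 = x0 :=
    ⟨orderOf c, orderOf_pos c, by rw [pow_orderOf_eq_one]; rfl⟩
  classical
  have hm := Nat.find_spec hex
  have hmin : ∀ j, j < Nat.find hex → 0 < j → (c ^ j) x0 ≠ x0 :=
    fun j hj h0 h => Nat.find_min hex hj ⟨h0, h⟩
  generalize Nat.find hex = m at hm hmin
  have hlow : ∀ z (j : ℕ), j < m → (σ ^ j) (x0, z) = ((c ^ j) x0, z) := by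
    intro z j
    induction j with
    | zero => intro _; rfl
    | succ j ih =>
      intro hj
      rw [pow_succ', Equiv.Perm.mul_apply, ih (by omega), happ]
      have := hmin (j + 1) hj (by omega)
      rw [pow_succ', Equiv.Perm.mul_apply] at this
      rw [if_neg this, add_zero, pow_succ', Equiv.Perm.mul_apply]
  have hone : ∀ z, σ.SameCycle (x0, z) (x0, z + 1) := by
    intro z
    obtain ⟨j, rfl⟩ : ∃ j, m = j + 1 := ⟨m - 1, by omega⟩
    refine ⟨((j + 1 : ℕ) : ℤ), ?_⟩
    have h2 := hm.2
    rw [pow_succ', Equiv.Perm.mul_apply] at h2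
    rw [zpow_natCast, pow_succ', Equiv.Perm.mul_apply, hlow z j (by omega), happ, h2, if_pos rfl]
  have hnat : ∀ n : ℕ, σ.SameCycle (x0, 0) (x0, (n : ZMod p)) := by
    intro n
    induction n with
    | zero => simp; exact Equiv.Perm.SameCycle.refl _ _
    | succ n ih => push_cast; exact ih.trans (hone _)
  have hz : ∀ z, σ.SameCycle (x0, 0) (x0, z) := by
    intro z
    have := hnat z.val
    rwa [ZMod.natCast_zmod_val] at this
  obtain ⟨x, z⟩ := y
  obtain ⟨i, hi⟩ := (ht x).symm.exists_nat_pow_eq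
  have h1 : σ.SameCycle (x, z) ((σ ^ i) (x, z)) := ⟨(i : ℤ), by rw [zpow_natCast]⟩
  have h2 : (σ ^ i) (x, z) = (x0, ((σ ^ i) (x, z)).2) := Prod.ext (by rw [hfst, hi]) rfl
  rw [h2] at h1
  exact (hz _).trans h1.symm

lemma LS_cycle (k : ℕ) : ∀ (T : Type) [Fintype T] [DecidableEq T] (c : Equiv.Perm T) (x0 : T),
    (∀ x, c.SameCycle x0 x) → Fintype.card T = k → Odd k → LS c k := by
  induction k using Nat.strong_induction_on with
  | _ k ih =>
    intro T _ _ c x0 ht hk hodd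
    by_cases h1 : k = 1
    · subst h1
      haveI : Subsingleton T := Fintype.card_le_one_iff_subsingleton.1 hk.le
      rw [Subsingleton.elim c 1]
      exact LS_one
    · haveI : Fact (k.minFac).Prime := ⟨Nat.minFac_prime h1⟩
      set p := k.minFac with hpdef
      obtain ⟨k', hk'⟩ : p ∣ k := Nat.minFac_dvd k
      have hk0 : 0 < k := hodd.pos
      have hk'0 : 0 < k' := Nat.pos_of_ne_zero (by rintro rfl; omega)
      haveI : NeZero k' := ⟨hk'0.ne'⟩
      have hp2 : p ≠ 2 := by
        intro h; rw [h] at hk'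
        rw [hk'] at hodd
        exact (Nat.not_odd_iff_even.2 (even_two_mul k')) hodd
      have hk'odd : Odd k' := by rw [hk'] at hodd; exact (Nat.odd_mul.1 hodd).2
      have hlt : k' < k := by
        have := (Fact.out : p.Prime).two_le
        nlinarith
      have hpow : ∀ n : ℕ, ((Equiv.addRight (1 : ZMod k')) ^ n) 0 = (n : ZMod k') := by
        intro n
        induction n with
        | zero => simp
        | succ n ihn => rw [pow_succ', Equiv.Perm.mul_apply, ihn]; simp
      have ht' : ∀ x, (Equiv.addRight (1 : ZMod k')).SameCycle 0 x := by
        intro x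
        refine ⟨(x.val : ℤ), ?_⟩
        rw [zpow_natCast, hpow, ZMod.natCast_zmod_val]
      have hLS := ih k' hlt (ZMod k') (Equiv.addRight 1) 0 ht' (ZMod.card k') hk'odd
      have hLS2 := LS_prod (p := p) hp2 (by rw [ZMod.card]; exact hk'odd) (Equiv.addRight 1) 0 ht' hLS
      have e : ZMod k' × ZMod p ≃ T := Fintype.equivOfCardEq (by
        rw [Fintype.card_prod, ZMod.card, ZMod.card, hk, hk', mul_comm])
      have hLS3 := LS_transport e hLS2
      rw [← hk'] at hLS3
      set σ := be (Pi.single (0 : ZMod k') (1 : ZMod p)) * io (Equiv.addRight (1 : ZMod k')) with hσ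
      have htr : ∀ x, (e.permCongr σ).SameCycle (e (0, 0)) x := by
        intro x
        obtain ⟨i, hi⟩ := trans_step (p := p) _ _ ht' (e.symm x)
        refine ⟨i, ?_⟩
        have : (e.permCongr σ) ^ i = e.permCongr (σ ^ i) := (map_zpow e.permCongrHom σ i).symm
        rw [this, Equiv.permCongr_apply, Equiv.symm_apply_apply, hi, Equiv.apply_symm_apply]
      have hct : (e.permCongr σ).cycleType = c.cycleType :=
        cycleType_eq_of_sameCycle fun x y =>
          ⟨fun _ => (ht x).symm.trans (ht y), fun _ => (htr x).symm.trans (htr y)⟩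
      obtain ⟨s, hs⟩ := isConj_iff.1 (Equiv.Perm.isConj_iff_cycleType_eq.2 hct)
      have hLS4 := LS_transport s hLS3
      have : s.permCongr (e.permCongr σ) = c := by
        rw [← hs]; ext x; rfl
      rwa [this] at hLS4

end AltDiv
end
section
set_option linter.unusedSectionVars false
open Finset
namespace AltDiv

lemma cycleType_subtypeCongr {T : Type} [Fintype T] [DecidableEq T] (p : T → Prop) [DecidablePred p]
    (c : Equiv.Perm {x // p x}) (h : Equiv.Perm {x // ¬ p x}) :
    (Equiv.Perm.subtypeCongr c h).cycleType = c.cycleType + h.cycleType := by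
  have e : Equiv.Perm.subtypeCongr c h = Equiv.Perm.ofSubtype c * Equiv.Perm.ofSubtype h := by
    ext x
    rw [Equiv.Perm.mul_apply]
    by_cases hx : p x
    · rw [Equiv.Perm.subtypeCongr.left_apply _ _ hx,
        Equiv.Perm.ofSubtype_apply_of_not_mem h (not_not.2 hx), Equiv.Perm.ofSubtype_apply_of_mem c hx]
    · rw [Equiv.Perm.subtypeCongr.right_apply _ _ hx, Equiv.Perm.ofSubtype_apply_of_mem h hx,
        Equiv.Perm.ofSubtype_apply_of_not_mem c (h ⟨x, hx⟩).2]
  have hd : Equiv.Perm.Disjoint (Equiv.Perm.ofSubtype c) (Equiv.Perm.ofSubtype h) := by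
    intro x
    by_cases hx : p x
    · right; exact Equiv.Perm.ofSubtype_apply_of_not_mem h (not_not.2 hx)
    · left; exact Equiv.Perm.ofSubtype_apply_of_not_mem c hx
  rw [e, hd.cycleType_mul, Equiv.Perm.cycleType_ofSubtype, Equiv.Perm.cycleType_ofSubtype]

lemma trans_cycleType {T : Type} [Fintype T] [DecidableEq T] (c : Equiv.Perm T) (x0 : T)
    (ht : ∀ x, c.SameCycle x0 x) :
    (c.cycleType = 0 ∧ Fintype.card T = 1) ∨ c.cycleType = {Fintype.card T} := by
  by_cases h1 : c x0 = x0
  · left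
    have hall : ∀ x, x = x0 := by
      intro x
      obtain ⟨i, hi⟩ := ht x
      rw [← hi]
      exact Equiv.Perm.zpow_apply_eq_self_of_apply_eq_self h1 i
    have : c = 1 := by ext x; rw [hall (c x), Equiv.Perm.one_apply, hall x]
    exact ⟨by rw [this, Equiv.Perm.cycleType_one], Fintype.card_eq_one_iff.2 ⟨x0, hall⟩⟩
  · right
    have hc : c.IsCycle := ⟨x0, h1, fun y _ => ht y⟩
    have hs : c.support = univ := by
      ext x
      simp only [Equiv.Perm.mem_support, mem_univ, iff_true]
      intro hx
      obtain ⟨i, hi⟩ := (ht x).symm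
      rw [Equiv.Perm.zpow_apply_eq_self_of_apply_eq_self hx i] at hi
      rw [hi] at hx; exact h1 hx
    rw [hc.cycleType, hs, card_univ]

lemma LS_all (N : ℕ) : ∀ (T : Type) [Fintype T] [DecidableEq T] (g : Equiv.Perm T),
    Fintype.card T = N → (∀ k ∈ g.cycleType, Odd k) → LS g g.cycleType.prod := by
  induction N using Nat.strong_induction_on with
  | _ N ih =>
    intro T _ _ g hN hodd
    classical
    rcases isEmpty_or_nonempty T with hE | ⟨⟨x⟩⟩
    · rw [Subsingleton.elim g 1, Equiv.Perm.cycleType_one]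
      exact LS_one
    · let p : T → Prop := fun y => g.SameCycle x y
      have hp : ∀ y, p (g y) ↔ p y := fun y => Equiv.Perm.sameCycle_apply_right
      have hnp : ∀ y, ¬ p (g y) ↔ ¬ p y := fun y => not_congr (hp y)
      have hpx : p x := Equiv.Perm.SameCycle.refl _ _
      let c : Equiv.Perm {y // p y} := g.subtypePerm hp
      let h : Equiv.Perm {y // ¬ p y} := g.subtypePerm hnp
      have hgc : g = Equiv.Perm.subtypeCongr c h := by
        ext y
        by_cases hy : p y
        · rw [Equiv.Perm.subtypeCongr.left_apply _ _ hy]; rfl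
        · rw [Equiv.Perm.subtypeCongr.right_apply _ _ hy]; rfl
      have hct : ∀ y, c.SameCycle ⟨x, hpx⟩ y := by
        rintro ⟨b, hb⟩
        obtain ⟨i, hi⟩ : g.SameCycle x b := hb
        refine ⟨i, ?_⟩
        rw [Equiv.Perm.subtypePerm_zpow]
        apply Subtype.ext
        simpa using hi
      clear_value c h
      have hty := cycleType_subtypeCongr p c h
      rw [← hgc] at hty
      have hh : LS h h.cycleType.prod := by
        refine ih (Fintype.card {y // ¬ p y}) ?_ _ h rfl ?_
        · rw [← hN]; exact Fintype.card_subtype_lt (x := x) (not_not.2 hpx)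
        · intro k hk; exact hodd k (by rw [hty]; exact Multiset.mem_add.2 (Or.inr hk))
      have hcc : LS c c.cycleType.prod := by
        rcases trans_cycleType c _ hct with ⟨h0, h1⟩ | h0
        · rw [h0]
          exact LS_cycle 1 _ c _ hct h1 odd_one
        · rw [h0, Multiset.prod_singleton]
          refine LS_cycle _ _ c _ hct rfl (hodd _ ?_)
          rw [hty, h0]; simp
      have := LS_combine p hcc hh
      rw [← Multiset.prod_add, ← hty, ← hgc] at this
      exact this
end AltDiv
end
section
set_option linter.unusedSectionVars false
open Finset
namespace AltDiv
section
variable {ι : Type} [Fintype ι] [DecidableEq ι]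
variable {W : Type*} [AddCommGroup W] [Module ℂ W] [FiniteDimensional ℂ W]

lemma Th_ne_zero [Nontrivial ι] (τ : Equiv.Perm ι) (hτ : Equiv.Perm.sign τ = -1)
    (ρ : Representation ℂ (alternatingGroup ι) W)
    (hρ : ∑ g, ρ.character g * ρ.character g⁻¹ = Fintype.card (alternatingGroup ι))
    (g : alternatingGroup ι) (hg : ρ.character g ≠ 0) : Th τ ρ g ≠ 0 := by
  intro h0
  have hDe : De τ ρ g = 2 * ρ.character g := by
    have h1 : De τ ρ g = 2 * chh ρ g - Th τ ρ g := by rw [De, Th]; ring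
    rw [h1, h0, chh_coe, sub_zero]
  have hDe0 : De τ ρ g ≠ 0 := by rw [hDe]; exact mul_ne_zero two_ne_zero hg
  have hcent : Subgroup.centralizer {(g : Equiv.Perm ι)} ≤ alternatingGroup ι := by
    intro s hs
    rw [Equiv.Perm.mem_alternatingGroup]
    by_contra hne
    have hs1 := (Int.units_eq_one_or (Equiv.Perm.sign s)).resolve_left hne
    have hc : s * (g : Equiv.Perm ι) * s⁻¹ = g := by
      have := Subgroup.mem_centralizer_iff.1 hs g rfl
      rw [← this, mul_inv_cancel_right]
    have h := De_conj τ ρ hτ s g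
    rw [hc, hs1] at h
    have h' : De τ ρ g = - De τ ρ g := by
      conv_lhs => rw [h]
      simp
    exact hDe0 (self_eq_neg.1 h')
  obtain ⟨hodd, hfix, hcount⟩ := Equiv.Perm.centralizer_le_alternating_iff.1 hcent
  set Q := (g : Equiv.Perm ι).cycleType.prod with hQ
  have hQodd : Odd Q := by
    rw [hQ]
    have : ∀ m : Multiset ℕ, (∀ k ∈ m, Odd k) → Odd m.prod := by
      intro m
      induction m using Multiset.induction with
      | empty => intro _; simp
      | cons a m ih =>
        intro h
        rw [Multiset.prod_cons]
        exact (h a (Multiset.mem_cons_self a m)).mul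
          (ih fun k hk => h k (Multiset.mem_cons_of_mem hk))
    exact this _ hodd
  have hcl := Equiv.Perm.card_isConj_mul_eq (g : Equiv.Perm ι)
  have hf1 : (Fintype.card ι - (g : Equiv.Perm ι).cycleType.sum).factorial = 1 := by
    rw [Nat.factorial_eq_one]; omega
  have hf2 : ∏ n ∈ (g : Equiv.Perm ι).cycleType.toFinset,
      ((g : Equiv.Perm ι).cycleType.count n).factorial = 1 :=
    Finset.prod_eq_one fun i _ => Nat.factorial_eq_one.2 (hcount i)
  rw [hf1, hf2, one_mul, mul_one, ← hQ] at hcl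
  -- norm bound
  have hbound : ‖De τ ρ g‖ ^ 2 ≤ Q := by
    classical
    obtain ⟨d, -, -, hd⟩ := norm_facts τ ρ hρ
    set C : Finset (Equiv.Perm ι) := univ.filter fun h => IsConj (g : Equiv.Perm ι) h with hC
    have hCc : Nat.card {h : Equiv.Perm ι | IsConj (g : Equiv.Perm ι) h} = #C := by
      rw [Nat.card_eq_fintype_card, ← Set.toFinset_card]
      congr 1
      ext h; simp [hC]
    rw [hCc] at hcl
    have h1 : ∑ h ∈ C, ‖De τ ρ h‖ ^ 2 = #C * ‖De τ ρ g‖ ^ 2 := by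
      rw [Finset.sum_congr rfl (g := fun _ => ‖De τ ρ g‖ ^ 2), sum_const, nsmul_eq_mul]
      intro h hh
      obtain ⟨s, hs⟩ := isConj_iff.1 (mem_filter.1 hh).2
      rw [← hs, De_conj τ ρ hτ, norm_mul]
      rcases Int.units_eq_one_or (Equiv.Perm.sign s) with h | h <;> rw [h] <;> simp
    have h2 : ∑ h ∈ C, ‖De τ ρ h‖ ^ 2 ≤ ∑ h, ‖De τ ρ h‖ ^ 2 :=
      sum_le_sum_of_subset_of_nonneg (subset_univ _) fun _ _ _ => by positivity
    have h3 : ((#C : ℝ)) * Q = (Fintype.card ι).factorial := by exact_mod_cast hcl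
    have hpos : (0 : ℝ) < (Fintype.card ι).factorial := by exact_mod_cast Nat.factorial_pos _
    have hC0 : (0 : ℝ) < #C := by
      rcases Nat.eq_zero_or_pos (#C) with h | h
      · rw [h] at h3; simp at h3; exact absurd h3.symm hpos.ne'
      · exact_mod_cast h
    have h4 : ∑ h, ‖De τ ρ h‖ ^ 2 ≤ (Fintype.card ι).factorial := by
      rw [hd]
      have : (0 : ℝ) ≤ (d : ℝ) := by positivity
      nlinarith
    have h5 : (#C : ℝ) * ‖De τ ρ g‖ ^ 2 ≤ #C * Q := by rw [← h1, h3]; exact h2.trans h4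
    exact le_of_mul_le_mul_left h5 hC0
  obtain ⟨J, hJ, a, y, hy, hid, u, hu, hF⟩ := LS_all _ ι (g : Equiv.Perm ι) rfl hodd
  rw [← hQ] at hu
  obtain ⟨b, hb⟩ := idem_De τ ρ a y (fun j => Equiv.Perm.mem_alternatingGroup.2 (hy j)) hid
  rw [hF _ (De_conj τ ρ hτ)] at hb
  have hu0 : u ≠ 0 := by
    rintro rfl
    simp at hu
  have hb0 : b ≠ 0 := by
    rintro rfl
    rw [Int.cast_zero] at hb
    exact (mul_ne_zero hu0 hDe0) hb
  have hsq : De τ ρ g ^ 2 = b ^ 2 * Q ∨ De τ ρ g ^ 2 = - (b ^ 2 * Q) := by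
    rw [← hb]
    rcases hu with h | h
    · left
      calc De τ ρ g ^ 2 = (u ^ 2 * Q) * De τ ρ g ^ 2 := by rw [h, one_mul]
        _ = _ := by ring
    · right
      calc De τ ρ g ^ 2 = -((u ^ 2 * Q) * De τ ρ g ^ 2) := by rw [h]; ring
        _ = _ := by ring
  have hQpos : (0 : ℝ) < Q := by exact_mod_cast hQodd.pos
  have hnorm : ‖De τ ρ g‖ ^ 2 = (b : ℝ) ^ 2 * Q := by
    rw [← norm_pow]
    rcases hsq with h | h <;> rw [h] <;> simp
  have hb1 : b ^ 2 = 1 := by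
    have h1 : (b : ℝ) ^ 2 ≤ 1 := by
      rw [hnorm] at hbound
      exact le_of_mul_le_mul_right (by linarith) hQpos
    have h2 : b ^ 2 ≤ 1 := by exact_mod_cast h1
    have h3 : 0 < b ^ 2 := by positivity
    omega
  have hb1' : (b : ℂ) ^ 2 = 1 := by exact_mod_cast hb1
  have hint : IsIntegral ℤ (ρ.character g ^ 2) := (char_integral ρ g).pow 2
  have hdvd : (4 : ℤ) ∣ (Q : ℤ) := by
    rw [hDe, hb1', one_mul] at hsq
    rcases hsq with h | h
    · refine dvd_of_integral_mul (by norm_num) hint ?_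
      push_cast; rw [← h]; ring
    · rw [← dvd_neg]
      refine dvd_of_integral_mul (by norm_num) hint ?_
      push_cast; rw [← h]; ring
  obtain ⟨k, hk⟩ := hQodd
  omega
end
end AltDiv
end

/-- If `χ` is an irreducible complex character of the alternating group `Aₙ`
(`n ≥ 1`) and `g ∈ Aₙ` satisfies `χ(g) ≠ 0`, then `o(g)·χ(1)` divides `|Aₙ|`. -/
theorem orderOf_mul_degree_dvd_card_of_char_ne_zero_alternatingGroup
    (n : ℕ) (hn : 1 ≤ n)
    (V : FDRep ℂ ↥(alternatingGroup (Fin n))) (hV : CategoryTheory.Simple V)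
    (g : ↥(alternatingGroup (Fin n)))
    (hg : V.character g ≠ 0) :
    orderOf g * Module.finrank ℂ V ∣ Nat.card ↥(alternatingGroup (Fin n)) := by
  classical
  let ρ : Representation ℂ (alternatingGroup (Fin n)) V := V.ρ
  have hρ : ∑ g, Representation.character ρ g * Representation.character ρ g⁻¹ = Fintype.card (alternatingGroup (Fin n)) := by
    have := (FDRep.simple_iff_char_is_norm_one (V := V)).1 hV
    rw [← Nat.card_eq_fintype_card]
    exact this
  rcases Nat.lt_or_ge n 2 with h | h
  · obtain rfl : n = 1 := by omega
    have hs : Subsingleton (alternatingGroup (Fin 1)) := inferInstance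
    have hg1 : g = 1 := Subsingleton.elim _ _
    have hc : Fintype.card (alternatingGroup (Fin 1)) = 1 := Fintype.card_eq_one_iff.2 ⟨1, fun _ => Subsingleton.elim _ _⟩
    rw [hc, Fintype.sum_subsingleton _ (1 : alternatingGroup (Fin 1)), inv_one, Representation.char_one] at hρ
    have h1 : Module.finrank ℂ V * Module.finrank ℂ V = 1 := by exact_mod_cast hρ
    rw [hg1, orderOf_one, one_mul, Nat.eq_one_of_mul_eq_one_left h1]
    exact one_dvd _
  · haveI : Nontrivial (Fin n) := Fin.nontrivial_iff_two_le.2 h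
    obtain ⟨i, j, hij⟩ := exists_pair_ne (Fin n)
    have hτ : Equiv.Perm.sign (Equiv.swap i j) = -1 := Equiv.Perm.sign_swap hij
    obtain ⟨M, hM, hM2⟩ := AltDiv.exists_M (Equiv.swap i j) hτ ρ hρ
    have hth := AltDiv.Th_ne_zero (Equiv.swap i j) hτ ρ hρ g hg
    have := hM2 _ hth
    rw [Subgroup.orderOf_coe] at this
    rw [Nat.card_eq_fintype_card, hM, mul_comm]
    exact Nat.mul_dvd_mul_left _ this
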